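/- Let μ_1, …, μ_N be integral linear forms on ℝ^d (i.e., with coefficients in ℤ) that generate (ℝ^d)* as a cone, let τ be an admissible μ-chamber, and let h : ℝ^d → ℝ be a homogeneous polynomial of degree m. Then there exist a finite set Ψ ⊆ ℚ^N and, for each multi-index α ∈ ℕ^N with |α| = α_1 + ⋯ + α_N ≤ d + m, a function c_α : ℝ^N → ℝ which is a finite real linear combination of products of at most d + m − |α| functions of the form b ↦ {⟨η, b⟩} with η ∈ Ψ (an empty product meaning the constant 1), such that for every b in the topological closure of τ both of the following hold: (a) Σ_{x ∈ ℤ^d ∩ P(b)} h(x) = Σ_{|α| ≤ d+m} c_α(b)·b^α, where b^α = b_1^{α_1}⋯b_N^{α_N} and the left-hand sum is finite since P(b) is compact; (b) Σ_{|α| = d+m} c_α(b)·b^α = ∫_{P(b)} h(x) dx, the integral being with respect to Lebesgue measure on ℝ^d. -/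

import Mathlib

open MeasureTheory

/-- `f` is a finite real linear combination of products of at most `k` functions of the
form `b ↦ {⟨η, b⟩}` with `η ∈ Ψ` (an empty product meaning the constant `1`). -/
def IsStepPoly {N : ℕ} (Ψ : Finset (Fin N → ℚ)) (k : ℕ) (f : (Fin N → ℝ) → ℝ) : Prop :=
  ∃ (n : ℕ) (coef : Fin n → ℝ) (L : Fin n → List (Fin N → ℚ)),
    (∀ i, (L i).length ≤ k ∧ ∀ η ∈ L i, η ∈ Ψ) ∧
    ∀ b : Fin N → ℝ,
      f b = ∑ i, coef i *
        ((L i).map (fun η => Int.fract (∑ j, (η j : ℝ) * b j))).prod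

/-!
A slight deformation of `P(b)` is simple, with a set of vertex bases that does not depend on `b` in
the closure of the chamber. The polarized (Lawrence–Varchenko) decomposition writes the indicator of
`P(b)` as a signed sum of vertex cones with some facets removed, uniformly in `b`. Modulo functions
invariant under a translation, the indicator of each cone on the lattice is a combination of
translates of indicators of unimodular cones (Barvinok), whose exponential sums are products of
geometric series. Extracting the coefficient of degree `m` expresses the sum of the `⟨l, x⟩ ^ m` as
a polynomial of degree at most `d + m` in `b` and the fractional parts `{⟨η, b⟩}`, for generic `l`;
the `m`-th powers of generic linear forms span the homogeneous polynomials of degree `m`. The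
coefficients of the monomials of degree `d + m` in `b` are constants, so the top-degree part is the
limit of the Riemann sums obtained by restricting the formula to the ray `n • b`.
-/

/-! ### Step polynomials -/

section StepPolynomials

variable {N k l : ℕ} {Ψ : Finset (Fin N → ℚ)} {f g : (Fin N → ℝ) → ℝ}

/-- The product of the fractional parts `{⟨η, b⟩}` over the list `L` of forms `η`. -/
noncomputable def fractMonomial (L : List (Fin N → ℚ)) (b : Fin N → ℝ) : ℝ :=
  (L.map fun η => Int.fract (∑ j, (η j : ℝ) * b j)).prod

theorem abs_fractMonomial_le_one (L : List (Fin N → ℚ)) (b : Fin N → ℝ) :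
    |fractMonomial L b| ≤ 1 := by
  induction L with
  | nil => simp [fractMonomial]
  | cons η L ih =>
    rw [fractMonomial, List.map_cons, List.prod_cons, abs_mul,
      abs_of_nonneg (Int.fract_nonneg _)]
    exact mul_le_one₀ (Int.fract_lt_one _).le (abs_nonneg _) ih

namespace IsStepPoly

theorem zero : IsStepPoly Ψ k 0 :=
  ⟨0, Fin.elim0, Fin.elim0, fun i => i.elim0, fun b => by simp⟩

theorem add (hf : IsStepPoly Ψ k f) (hg : IsStepPoly Ψ k g) : IsStepPoly Ψ k (f + g) := by
  obtain ⟨n, c, L, hL, hf⟩ := hf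
  obtain ⟨n', c', L', hL', hg⟩ := hg
  refine ⟨n + n', Fin.append c c', Fin.append L L', fun i => ?_, fun b => ?_⟩
  · refine Fin.addCases (fun i => ?_) (fun i => ?_) i
    · simpa using hL i
    · simpa using hL' i
  · simp [Fin.sum_univ_add, hf, hg]

theorem smul (a : ℝ) (hf : IsStepPoly Ψ k f) : IsStepPoly Ψ k (a • f) := by
  obtain ⟨n, c, L, hL, hf⟩ := hf
  refine ⟨n, fun i => a * c i, L, hL, fun b => ?_⟩
  simp [hf, Finset.mul_sum, mul_assoc]

theorem fractMonomial {L : List (Fin N → ℚ)} (hL : L.length ≤ k) (hΨ : ∀ η ∈ L, η ∈ Ψ) :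
    IsStepPoly Ψ k (fractMonomial L) :=
  ⟨1, fun _ => 1, fun _ => L, fun _ => ⟨hL, hΨ⟩, fun b => by simp [_root_.fractMonomial]⟩

theorem exists_forall_abs_le (hf : IsStepPoly Ψ k f) : ∃ C, ∀ b, |f b| ≤ C := by
  obtain ⟨n, c, L, -, hf⟩ := hf
  refine ⟨∑ i, |c i|, fun b => ?_⟩
  rw [hf]
  refine (Finset.abs_sum_le_sum_abs _ _).trans (Finset.sum_le_sum fun i _ => ?_)
  rw [abs_mul]
  exact mul_le_of_le_one_right (abs_nonneg _) (abs_fractMonomial_le_one (L i) b)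

theorem apply_eq_apply (hf : IsStepPoly Ψ 0 f) (b b' : Fin N → ℝ) : f b = f b' := by
  obtain ⟨n, c, L, hL, hf⟩ := hf
  have hnil (i) : L i = [] := List.length_eq_zero_iff.mp (Nat.le_zero.mp (hL i).1)
  simp [hf, hnil]

end IsStepPoly

/-- The space of functions of degree at most `k` for the filtration by total degree on the algebra
generated by the coordinates and the functions `b ↦ {⟨η, b⟩}` with `η ∈ Ψ`. -/
def stepFiltration (Ψ : Finset (Fin N → ℚ)) (k : ℕ) : Submodule ℝ ((Fin N → ℝ) → ℝ) :=
  Submodule.span ℝ {f | ∃ (α : Fin N → ℕ) (L : List (Fin N → ℚ)),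
    ∑ i, α i + L.length ≤ k ∧ (∀ η ∈ L, η ∈ Ψ) ∧
      f = fun b => fractMonomial L b * ∏ i, b i ^ α i}

theorem stepFiltration_mono (h : k ≤ l) : stepFiltration Ψ k ≤ stepFiltration Ψ l :=
  Submodule.span_mono fun _ ⟨α, L, hk, hL⟩ => ⟨α, L, hk.trans h, hL⟩

theorem stepFiltration_mono_left {Ψ' : Finset (Fin N → ℚ)} (h : Ψ ⊆ Ψ') :
    stepFiltration Ψ k ≤ stepFiltration Ψ' k :=
  Submodule.span_mono fun _ ⟨α, L, hk, hL, hf⟩ => ⟨α, L, hk, fun η hη => h (hL η hη), hf⟩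

theorem mul_mem_stepFiltration (hf : f ∈ stepFiltration Ψ k) (hg : g ∈ stepFiltration Ψ l) :
    f * g ∈ stepFiltration Ψ (k + l) := by
  have h := Submodule.mul_mem_mul hf hg
  rw [stepFiltration, stepFiltration, Submodule.span_mul_span] at h
  refine Submodule.span_mono ?_ h
  rintro _ ⟨_, ⟨α, L, hk, hL, rfl⟩, _, ⟨α', L', hl, hL', rfl⟩, rfl⟩
  refine ⟨α + α', L ++ L', ?_, fun η hη => (List.mem_append.mp hη).elim (hL η) (hL' η), ?_⟩
  · simp only [Pi.add_apply, Finset.sum_add_distrib, List.length_append]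
    omega
  · funext b
    simp only [fractMonomial, Pi.mul_apply, Pi.add_apply, pow_add, Finset.prod_mul_distrib,
      List.map_append, List.prod_append]
    ring

theorem one_mem_stepFiltration : 1 ∈ stepFiltration Ψ k :=
  Submodule.subset_span ⟨0, [], by simp, by simp, by ext; simp [fractMonomial]⟩

theorem pow_mem_stepFiltration (hf : f ∈ stepFiltration Ψ 1) (n : ℕ) :
    f ^ n ∈ stepFiltration Ψ n := by
  induction n with
  | zero => simpa using one_mem_stepFiltration
  | succ n ih => exact pow_succ f n ▸ mul_mem_stepFiltration ih hf

theorem coord_mem_stepFiltration (j : Fin N) : (fun b => b j) ∈ stepFiltration Ψ 1 := by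
  refine Submodule.subset_span ⟨Pi.single j 1, [], by simp, by simp, ?_⟩
  ext b
  simp [fractMonomial, Pi.single_apply]

theorem fract_mem_stepFiltration {η : Fin N → ℚ} (hη : η ∈ Ψ) :
    (fun b => Int.fract (∑ j, (η j : ℝ) * b j)) ∈ stepFiltration Ψ 1 :=
  Submodule.subset_span ⟨0, [η], by simp, by simpa using hη, by ext; simp [fractMonomial]⟩

theorem floor_mem_stepFiltration {η : Fin N → ℚ} (hη : η ∈ Ψ) :
    (fun b => (⌊∑ j, (η j : ℝ) * b j⌋ : ℝ)) ∈ stepFiltration Ψ 1 := by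
  have hfloor : (fun b : Fin N → ℝ => (⌊∑ j, (η j : ℝ) * b j⌋ : ℝ)) =
      ∑ j, (η j : ℝ) • (fun b => b j) - fun b => Int.fract (∑ j, (η j : ℝ) * b j) := by
    ext b
    simp
  rw [hfloor]
  exact Submodule.sub_mem _
    (Submodule.sum_mem _ fun j _ => Submodule.smul_mem _ _ (coord_mem_stepFiltration j))
    (fract_mem_stepFiltration hη)

theorem finite_setOf_sum_le (ι : Type*) [Fintype ι] (k : ℕ) :
    {α : ι → ℕ | ∑ i, α i ≤ k}.Finite := by
  classical
  refine (Set.finite_Icc 0 fun _ => k).subset fun α (hα : ∑ i, α i ≤ k) =>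
    ⟨fun _ => Nat.zero_le _, fun i => ?_⟩
  exact (Finset.single_le_sum (fun _ _ => Nat.zero_le _) (Finset.mem_univ i)).trans hα

theorem exists_isStepPoly_of_mem_stepFiltration (hf : f ∈ stepFiltration Ψ k) :
    ∃ c : (Fin N → ℕ) → (Fin N → ℝ) → ℝ,
      (∀ α : Fin N → ℕ, ∑ i, α i ≤ k → IsStepPoly Ψ (k - ∑ i, α i) (c α)) ∧
      ∀ b, f b = ∑ᶠ α ∈ {α : Fin N → ℕ | ∑ i, α i ≤ k}, c α b * ∏ i, b i ^ α i := by
  have hfin := finite_setOf_sum_le (Fin N) k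
  induction hf using Submodule.span_induction with
  | mem f hf =>
    obtain ⟨α, L, hk, hL, rfl⟩ := hf
    refine ⟨Pi.single α (fractMonomial L), fun β _ => ?_, fun b => ?_⟩
    · obtain rfl | hβ := eq_or_ne β α
      · rw [Pi.single_eq_same]
        exact IsStepPoly.fractMonomial (by omega) hL
      · rw [Pi.single_eq_of_ne hβ]
        exact IsStepPoly.zero
    · rw [finsum_mem_eq_finite_toFinset_sum _ hfin, Finset.sum_eq_single α]
      · simp
      · intro β _ hβ
        simp [Pi.single_eq_of_ne hβ]
      · intro hα
        exact absurd (by simp; omega) hα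
  | zero => exact ⟨0, fun _ _ => IsStepPoly.zero, fun b => by simp⟩
  | add f g _ _ hf hg =>
    obtain ⟨⟨c, hc, hf⟩, c', hc', hg⟩ := And.intro hf hg
    refine ⟨c + c', fun α hα => (hc α hα).add (hc' α hα), fun b => ?_⟩
    rw [Pi.add_apply, hf, hg, ← finsum_mem_add_distrib hfin]
    simp [add_mul]
  | smul a f _ hf =>
    obtain ⟨c, hc, hf⟩ := hf
    refine ⟨a • c, fun α hα => (hc α hα).smul a, fun b => ?_⟩
    rw [Pi.smul_apply, hf, smul_eq_mul, finsum_mem_eq_finite_toFinset_sum _ hfin,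
      finsum_mem_eq_finite_toFinset_sum _ hfin, Finset.mul_sum]
    simp [mul_assoc]

end StepPolynomials

/-! ### Regularized exponential sums -/

section Regularization

open AddMonoidAlgebra PowerSeries

variable {Λ K : Type*} [AddCommGroup Λ] [Field K]

variable (Λ K) in
/-- The action of the group algebra `K[Λ]` on the functions `Λ → K` by translations. -/
noncomputable def translationAction : K[Λ] →ₐ[K] Module.End K (Λ → K) :=
  AddMonoidAlgebra.lift K (Module.End K (Λ → K)) Λ
    { toFun := fun v => LinearMap.funLeft K K (· - v.toAdd)
      map_one' := by ext; simp [LinearMap.funLeft_apply]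
      map_mul' := fun v w => by
        ext f x
        simp [LinearMap.funLeft_apply, sub_sub] }

theorem translationAction_single (v : Λ) (a : K) (f : Λ → K) (x : Λ) :
    translationAction Λ K (single v a) f x = a * f (x - v) := by
  simp [translationAction, LinearMap.funLeft_apply]

theorem translationAction_coeff (g p : K[Λ]) :
    translationAction Λ K g p.coeff = (g * p).coeff := by
  induction g using AddMonoidAlgebra.induction_linear with
  | zero => simp
  | add g g' hg hg' => simp [add_mul, hg, hg']
  | single v a =>
    ext x
    rw [translationAction_single, coeff_single_mul_apply, neg_add_eq_sub]

theorem translationAction_one_sub_single (v : Λ) (f : Λ → K) (x : Λ) :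
    translationAction Λ K (1 - single v 1) f x = f x - f (x - v) := by
  simp [translationAction_single]

variable (K) in
/-- The span of the functions on `Λ` invariant under translation by some vector of `V`; it plays
the role of the indicator functions of cones containing lines. -/
def invariantSpan (V : Set Λ) : Submodule K (Λ → K) :=
  Submodule.span K {f | ∃ v ∈ V, ∀ x, f (x + v) = f x}

variable [Algebra ℚ K]

/-- The power series `exp (a X)`. -/
noncomputable def expSeries (a : K) : K⟦X⟧ :=
  rescale a (exp K)

theorem expSeries_zero : expSeries (0 : K) = 1 := by
  simp [expSeries]

theorem expSeries_add (a b : K) : expSeries (a + b) = expSeries a * expSeries b :=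
  (exp_mul_exp_eq_exp_add a b).symm

theorem coeff_expSeries (a : K) (n : ℕ) :
    coeff n (expSeries a) = a ^ n * algebraMap ℚ K (1 / n.factorial) := by
  simp [expSeries, coeff_rescale, coeff_exp]

theorem exists_one_sub_expSeries_eq_X_mul (a : K) :
    ∃ u : K⟦X⟧, constantCoeff u = -a ∧ 1 - expSeries a = X * u := by
  have hconst : constantCoeff (1 - expSeries a) = 0 := by
    rw [← coeff_zero_eq_constantCoeff_apply, map_sub, coeff_expSeries]
    simp
  obtain ⟨u, hu⟩ := X_dvd_iff.mpr hconst
  refine ⟨u, ?_, hu⟩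
  have hlin := congrArg (PowerSeries.coeff (0 + 1)) hu
  rw [coeff_succ_X_mul, map_sub, coeff_expSeries] at hlin
  simpa [coeff_one] using hlin.symm

theorem one_sub_expSeries_ne_zero {a : K} (ha : a ≠ 0) : 1 - expSeries a ≠ 0 := by
  obtain ⟨u, hu, h⟩ := exists_one_sub_expSeries_eq_X_mul a
  rw [h]
  refine mul_ne_zero X_ne_zero ?_
  rintro rfl
  simp [eq_comm, ha] at hu

theorem exists_mul_one_sub_expSeries_eq_X {a : K} (ha : a ≠ 0) :
    ∃ q : K⟦X⟧, (1 - expSeries a) * q = X := by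
  obtain ⟨u, hu, h⟩ := exists_one_sub_expSeries_eq_X_mul a
  have hu0 : constantCoeff u ≠ 0 := by rwa [hu, neg_ne_zero]
  exact ⟨u⁻¹, by rw [h, mul_assoc, PowerSeries.mul_inv_cancel u hu0, mul_one]⟩

/-- The exponential sum `p ↦ ∑ x, p x * exp (ℓ x * X)` of finitely supported functions on `Λ`. -/
noncomputable def expSum (ℓ : Λ →+ K) : K[Λ] →ₐ[K] K⟦X⟧ :=
  AddMonoidAlgebra.lift K K⟦X⟧ Λ
    { toFun := fun v => expSeries (ℓ v.toAdd)
      map_one' := by simp [expSeries_zero]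
      map_mul' := fun v w => by simp [expSeries_add] }

variable {ℓ : Λ →+ K} {k : ℕ}

theorem expSum_single (v : Λ) (a : K) : expSum ℓ (single v a) = a • expSeries (ℓ v) := by
  simp [expSum]

theorem expSum_one_sub_single (v : Λ) :
    expSum ℓ (1 - single v 1) = 1 - expSeries (ℓ v) := by
  rw [map_sub, map_one, expSum_single, one_smul]

theorem factorial_mul_coeff_expSum (p : K[Λ]) (m : ℕ) :
    m.factorial * PowerSeries.coeff m (expSum ℓ p) = p.coeff.sum fun x a => a * ℓ x ^ m := by
  have hm : (m.factorial : K) ≠ 0 := by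
    have := algebraRat.charZero K
    exact_mod_cast m.factorial_ne_zero
  rw [expSum, AddMonoidAlgebra.lift_apply, Finsupp.sum, map_sum, Finset.mul_sum]
  refine Finset.sum_congr rfl fun x _ => ?_
  simp only [MonoidHom.coe_mk, OneHom.coe_mk, toAdd_ofAdd, PowerSeries.coeff_smul,
    coeff_expSeries, one_div, map_inv₀, map_natCast, smul_eq_mul]
  field_simp

variable (ℓ k) in
/-- The regularized exponential sum, as a linear relation. A function `f` on `Λ` is related to `φ`
when some element `g` of the group algebra whose exponential sum does not vanish turns `f` into a
finitely supported function `p`, and `X ^ k * expSum ℓ p = expSum ℓ g * φ`. The factor `X ^ k`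
clears the poles, so that `φ` is a power series. -/
noncomputable def regularizedSum : Submodule K ((Λ → K) × K⟦X⟧) where
  carrier := {z | ∃ g : K[Λ], expSum ℓ g ≠ 0 ∧ ∃ p : K[Λ], translationAction Λ K g z.1 = p.coeff ∧
    X ^ k * expSum ℓ p = expSum ℓ g * z.2}
  zero_mem' := ⟨1, by simp, 0, by simp, by simp⟩
  add_mem' := by
    rintro ⟨f, φ⟩ ⟨f', φ'⟩ ⟨g, hg, p, hp, hφ⟩ ⟨g', hg', p', hp', hφ'⟩
    dsimp only [Prod.mk_add_mk] at *
    refine ⟨g * g', by simp [hg, hg'], g' * p + g * p', ?_, ?_⟩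
    · have hcomm : translationAction Λ K (g * g') f = translationAction Λ K (g' * g) f := by
        rw [mul_comm]
      rw [map_add, hcomm, map_mul, map_mul, Module.End.mul_apply, Module.End.mul_apply, hp, hp',
        translationAction_coeff, translationAction_coeff, coeff_add, Finsupp.coe_add]
    · simp only [map_add, map_mul]
      linear_combination expSum ℓ g' * hφ + expSum ℓ g * hφ'
  smul_mem' := by
    rintro a ⟨f, φ⟩ ⟨g, hg, p, hp, hφ⟩
    dsimp only [Prod.smul_mk] at *
    refine ⟨g, hg, a • p, ?_, ?_⟩
    · rw [map_smul, hp, AddMonoidAlgebra.coeff_smul, Finsupp.coe_smul]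
    · rw [map_smul, mul_smul_comm, hφ, mul_smul_comm]

theorem eq_zero_of_mem_regularizedSum {φ : K⟦X⟧} (h : (0, φ) ∈ regularizedSum ℓ k) : φ = 0 := by
  obtain ⟨g, hg, p, hp, hφ⟩ := h
  have hp0 : p = 0 := by
    ext x
    simpa using (congrFun hp x).symm
  rw [hp0, map_zero, mul_zero, eq_comm] at hφ
  exact (mul_eq_zero.mp hφ).resolve_left hg

theorem coeff_mem_regularizedSum (p : K[Λ]) :
    (⇑p.coeff, X ^ k * expSum ℓ p) ∈ regularizedSum ℓ k :=
  ⟨1, by simp, p, by simp, by simp⟩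

theorem mem_regularizedSum_of_mem_invariantSpan {V : Set Λ} (hV : ∀ v ∈ V, ℓ v ≠ 0)
    {f : Λ → K} (hf : f ∈ invariantSpan K V) : (f, 0) ∈ regularizedSum ℓ k := by
  suffices h : invariantSpan K V ≤ (regularizedSum ℓ k).comap (LinearMap.inl K _ _) from h hf
  refine Submodule.span_le.mpr ?_
  rintro f ⟨v, hv, hf⟩
  refine ⟨1 - single v 1, ?_, 0, ?_, by simp⟩
  · rw [expSum_one_sub_single]
    exact one_sub_expSeries_ne_zero (hV v hv)
  · ext x
    have hx := hf (x - v)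
    rw [sub_add_cancel] at hx
    simpa [hx] using translationAction_one_sub_single v f x

end Regularization

/-! ### Unimodular cones -/

section UnimodularCones

open AddMonoidAlgebra
open scoped Matrix

theorem translationAction_prod_one_sub_single {n Λ K : Type*} [Fintype n] [DecidableEq n]
    [AddCommGroup Λ] [Field K] {v : n → Λ} {F : n → Λ → K}
    (hF : ∀ i j, i ≠ j → ∀ x, F i (x - v j) = F i x) (J : Finset n) :
    translationAction Λ K (∏ j ∈ J, (1 - single (v j) 1)) (∏ i, F i) =
      (∏ i ∈ J, fun x => F i x - F i (x - v i)) * ∏ i ∈ Jᶜ, F i := by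
  induction J using Finset.induction_on with
  | empty => simp
  | insert j J hj ih =>
    have hjJ : insert j (insert j J)ᶜ = Jᶜ := by
      rw [Finset.compl_insert, Finset.insert_erase (Finset.mem_compl.mpr hj)]
    have hsplit : ∏ i ∈ Jᶜ, F i = F j * ∏ i ∈ (insert j J)ᶜ, F i := by
      rw [← hjJ, Finset.prod_insert (by simp)]
    rw [Finset.prod_insert hj, map_mul, Module.End.mul_apply, ih, hsplit]
    ext x
    have hJ : ∏ i ∈ J, (F i (x - v j) - F i (x - v j - v i)) =
        ∏ i ∈ J, (F i x - F i (x - v i)) := by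
      refine Finset.prod_congr rfl fun i hi => ?_
      have hij : i ≠ j := fun h => hj (h ▸ hi)
      rw [sub_right_comm, hF i j hij, hF i j hij]
    have hJc : ∏ i ∈ (insert j J)ᶜ, F i (x - v j) = ∏ i ∈ (insert j J)ᶜ, F i x := by
      refine Finset.prod_congr rfl fun i hi => hF i j (fun h => ?_) x
      simp [h] at hi
    rw [translationAction_one_sub_single]
    simp only [Pi.mul_apply, Finset.prod_apply, Finset.prod_insert hj, hJ, hJc]
    ring

variable {n : Type*} [Fintype n]

/-- The indicator function of the lattice points `x` with `⟨r, x⟩ ≤ t`. -/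
noncomputable def halfSpaceIndicator (r : n → ℤ) (t : ℝ) (x : n → ℤ) : ℝ :=
  if ((r ⬝ᵥ x : ℤ) : ℝ) ≤ t then 1 else 0

/-- The indicator function of the lattice points `x` with `M x ≤ t`. -/
noncomputable def coneIndicator (M : Matrix n n ℤ) (t : n → ℝ) : (n → ℤ) → ℝ :=
  ∏ i, halfSpaceIndicator (M.row i) (t i)

theorem halfSpaceIndicator_add_of_dotProduct_eq_zero {r v : n → ℤ} (h : r ⬝ᵥ v = 0) (t : ℝ)
    (x : n → ℤ) : halfSpaceIndicator r t (x + v) = halfSpaceIndicator r t x := by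
  simp [halfSpaceIndicator, dotProduct_add, h]

theorem halfSpaceIndicator_sub_halfSpaceIndicator_add {r v : n → ℤ} (h : r ⬝ᵥ v = 1) (t : ℝ)
    (x : n → ℤ) :
    halfSpaceIndicator r t x - halfSpaceIndicator r t (x + v) =
      if r ⬝ᵥ x = ⌊t⌋ then 1 else 0 := by
  simp only [halfSpaceIndicator, dotProduct_add, h, ← Int.le_floor]
  split_ifs <;> first | omega | norm_num

variable [DecidableEq n] {U : Matrix n n ℤ}

theorem row_dotProduct_nonsing_inv_col (hU : IsUnit U.det) (i j : n) :
    U.row i ⬝ᵥ U⁻¹.col j = if i = j then 1 else 0 := by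
  rw [← Matrix.one_apply, ← Matrix.mul_nonsing_inv U hU]
  rfl

theorem sum_row_dotProduct_smul_nonsing_inv_col (hU : IsUnit U.det) (x : n → ℤ) :
    ∑ j, (U.row j ⬝ᵥ x) • U⁻¹.col j = x := by
  have hx : U⁻¹ *ᵥ (U *ᵥ x) = x := by
    rw [Matrix.mulVec_mulVec, Matrix.nonsing_inv_mul U hU, Matrix.one_mulVec]
  rw [Matrix.mulVec_eq_sum] at hx
  simp only [op_smul_eq_smul] at hx
  exact hx

theorem forall_row_dotProduct_eq_iff (hU : IsUnit U.det) (x z : n → ℤ) :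
    (∀ i, U.row i ⬝ᵥ x = z i) ↔ ∑ j, z j • U⁻¹.col j = x := by
  refine ⟨fun h => ?_, ?_⟩
  · simp only [← h, sum_row_dotProduct_smul_nonsing_inv_col hU]
  · rintro rfl i
    simp [-zsmul_eq_mul, dotProduct_sum, row_dotProduct_nonsing_inv_col hU]

theorem translationAction_coneIndicator (hU : IsUnit U.det) (t : n → ℝ) :
    translationAction (n → ℤ) ℝ (∏ j, (1 - single (-U⁻¹.col j) 1)) (coneIndicator U t) =
      (single (∑ j, ⌊t j⌋ • U⁻¹.col j) (1 : ℝ)).coeff := by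
  rw [coneIndicator, translationAction_prod_one_sub_single fun i j hij x => ?invariant]
  case invariant =>
    rw [sub_neg_eq_add, halfSpaceIndicator_add_of_dotProduct_eq_zero]
    rw [row_dotProduct_nonsing_inv_col hU, if_neg hij]
  ext x
  have hdiff (i : n) : U.row i ⬝ᵥ U⁻¹.col i = 1 := by
    rw [row_dotProduct_nonsing_inv_col hU, if_pos rfl]
  simp [halfSpaceIndicator_sub_halfSpaceIndicator_add (hdiff _), Finset.prod_boole,
    Finsupp.single_apply, forall_row_dotProduct_eq_iff hU x fun j => ⌊t j⌋]

theorem exists_coneIndicator_mem_regularizedSum {ℓ : (n → ℤ) →+ ℝ} (hU : IsUnit U.det)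
    (hℓ : ∀ j, ℓ (U⁻¹.col j) ≠ 0) :
    ∃ Q : PowerSeries ℝ, ∀ t : n → ℝ,
      (coneIndicator U t, expSeries (∑ j, ⌊t j⌋ * ℓ (U⁻¹.col j)) * Q) ∈
        regularizedSum ℓ (Fintype.card n) := by
  choose q hq using fun j => exists_mul_one_sub_expSeries_eq_X (neg_ne_zero.mpr (hℓ j))
  have hg : expSum ℓ (∏ j, (1 - single (-U⁻¹.col j) 1)) =
      ∏ j, (1 - expSeries (-ℓ (U⁻¹.col j))) := by
    simp only [map_prod, expSum_one_sub_single, map_neg]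
  have hprod : expSum ℓ (∏ j, (1 - single (-U⁻¹.col j) 1)) * ∏ j, q j =
      PowerSeries.X ^ Fintype.card n := by
    rw [hg, ← Finset.prod_mul_distrib, Finset.prod_congr rfl fun j _ => hq j]
    simp
  refine ⟨∏ j, q j, fun t => ⟨∏ j, (1 - single (-U⁻¹.col j) 1), ?_,
    single (∑ j, ⌊t j⌋ • U⁻¹.col j) 1, translationAction_coneIndicator hU t, ?_⟩⟩
  · exact left_ne_zero_of_mul (hprod ▸ pow_ne_zero _ PowerSeries.X_ne_zero)
  · have hpair : ℓ (∑ j, ⌊t j⌋ • U⁻¹.col j) = ∑ j, ⌊t j⌋ * ℓ (U⁻¹.col j) := by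
      rw [map_sum]
      exact Finset.sum_congr rfl fun j _ => by rw [map_zsmul, zsmul_eq_mul]
    rw [expSum_single, one_smul, hpair, ← hprod]
    ring

end UnimodularCones

/-! ### Decomposition of simplicial cones into unimodular cones -/

section ConeDecomposition

open scoped Matrix

section HalfSpaces

variable {ι n : Type*} [Fintype n] {I : Finset ι} {δ : ℤ} {l : n → ℤ} {u : ℝ} {c : ι → ℤ}
  {r : ι → n → ℤ} {t : ι → ℝ}

theorem mul_dotProduct_sub_eq_sum (hl : δ • l = ∑ i ∈ I, c i • r i)
    (hu : δ * u = ∑ i ∈ I, c i * t i) (x : n → ℤ) :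
    δ * ((l ⬝ᵥ x : ℤ) - u) = ∑ i ∈ I, c i * ((r i ⬝ᵥ x : ℤ) - t i) := by
  have hx : δ * (l ⬝ᵥ x) = ∑ i ∈ I, c i * (r i ⬝ᵥ x) := by
    rw [← smul_eq_mul, ← smul_dotProduct, hl, sum_dotProduct]
    simp only [smul_dotProduct, smul_eq_mul]
  simp only [mul_sub, Finset.sum_sub_distrib, hu]
  exact_mod_cast congrArg (fun m : ℤ => (m : ℝ) - ∑ i ∈ I, c i * t i) hx

theorem halfSpaceIndicator_eq_one_iff {l x : n → ℤ} :
    halfSpaceIndicator l u x = 1 ↔ ((l ⬝ᵥ x : ℤ) : ℝ) ≤ u := by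
  simp [halfSpaceIndicator]

theorem halfSpaceIndicator_eq_zero_iff {l x : n → ℤ} :
    halfSpaceIndicator l u x = 0 ↔ u < ((l ⬝ᵥ x : ℤ) : ℝ) := by
  simp [halfSpaceIndicator]

theorem prod_halfSpaceIndicator_add_of_dotProduct_eq_zero {v : n → ℤ}
    (h : ∀ i ∈ I, r i ⬝ᵥ v = 0) (t : ι → ℝ) (x : n → ℤ) :
    ∏ i ∈ I, halfSpaceIndicator (r i) (t i) (x + v) = ∏ i ∈ I, halfSpaceIndicator (r i) (t i) x :=
  Finset.prod_congr rfl fun i hi => halfSpaceIndicator_add_of_dotProduct_eq_zero (h i hi) _ _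

theorem halfSpaceIndicator_mul_prod_eq_prod (hδ : 0 < δ) (hc : ∀ i ∈ I, 0 < c i)
    (hl : δ • l = ∑ i ∈ I, c i • r i) (hu : δ * u = ∑ i ∈ I, c i * t i) :
    halfSpaceIndicator l u * ∏ i ∈ I, halfSpaceIndicator (r i) (t i) =
      ∏ i ∈ I, halfSpaceIndicator (r i) (t i) := by
  ext x
  rw [Pi.mul_apply, Finset.prod_apply]
  by_cases hx : ∀ i ∈ I, ((r i ⬝ᵥ x : ℤ) : ℝ) ≤ t i
  · have hle : (δ : ℝ) * ((l ⬝ᵥ x : ℤ) - u) ≤ 0 := by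
      rw [mul_dotProduct_sub_eq_sum hl hu]
      exact Finset.sum_nonpos fun i hi => mul_nonpos_of_nonneg_of_nonpos
        (mod_cast (hc i hi).le) (sub_nonpos.mpr (hx i hi))
    have hlx := nonpos_of_mul_nonpos_right hle (mod_cast hδ)
    rw [halfSpaceIndicator_eq_one_iff.mpr (sub_nonpos.mp hlx), one_mul]
  · push Not at hx
    obtain ⟨i, hi, hx⟩ := hx
    rw [Finset.prod_eq_zero hi (halfSpaceIndicator_eq_zero_iff.mpr hx), mul_zero]

theorem halfSpaceIndicator_mul_prod_sub_one (hI : I.Nonempty) (hδ : 0 < δ)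
    (hc : ∀ i ∈ I, 0 < c i) (hl : δ • l = ∑ i ∈ I, c i • r i)
    (hu : δ * u = ∑ i ∈ I, c i * t i) :
    halfSpaceIndicator l u * ∏ i ∈ I, (halfSpaceIndicator (r i) (t i) - 1) = 0 := by
  ext x
  rw [Pi.mul_apply, Finset.prod_apply]
  by_cases hx : ∃ i ∈ I, ((r i ⬝ᵥ x : ℤ) : ℝ) ≤ t i
  · obtain ⟨i, hi, hx⟩ := hx
    have hi1 : (halfSpaceIndicator (r i) (t i) - 1) x = 0 :=
      sub_eq_zero.mpr (halfSpaceIndicator_eq_one_iff.mpr hx)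
    rw [Finset.prod_eq_zero hi hi1, mul_zero]
    rfl
  · push Not at hx
    have hlt : 0 < (δ : ℝ) * ((l ⬝ᵥ x : ℤ) - u) := by
      rw [mul_dotProduct_sub_eq_sum hl hu]
      exact Finset.sum_pos (fun i hi => mul_pos (mod_cast hc i hi) (sub_pos.mpr (hx i hi))) hI
    have hlx := pos_of_mul_pos_right hlt (mod_cast hδ.le)
    rw [halfSpaceIndicator_eq_zero_iff.mpr (sub_pos.mp hlx), zero_mul]
    rfl

end HalfSpaces

theorem mul_prod_sub_one_sub_mem {ι A : Type*} [DecidableEq ι] [CommRing A] {S : AddSubgroup A}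
    {I : Finset ι} (hI : I.Nonempty) {a : A} {f : ι → A}
    (hS : ∀ J ⊆ I, 1 < (I \ J).card → a * ∏ i ∈ J, f i ∈ S) :
    a * ∏ i ∈ I, (f i - 1) - (a * ∏ i ∈ I, f i - ∑ i ∈ I, a * ∏ j ∈ I.erase i, f j) ∈ S := by
  obtain ⟨k, hk⟩ := Nat.exists_eq_succ_of_ne_zero hI.card_pos.ne'
  have hexpand : a * ∏ i ∈ I, (f i - 1) - (a * ∏ i ∈ I, f i - ∑ i ∈ I, a * ∏ j ∈ I.erase i, f j) =
      ∑ m ∈ Finset.range k, ∑ J ∈ I.powersetCard (m + 1 + 1),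
        (-1) ^ J.card * (a * ∏ i ∈ I \ J, f i) := by
    rw [Finset.prod_sub, Finset.sum_powerset, hk, Finset.sum_range_succ', Finset.sum_range_succ',
      Finset.powersetCard_zero, Finset.powersetCard_one]
    simp only [Finset.sum_singleton, Finset.sum_map, Function.Embedding.coeFn_mk,
      Finset.card_empty, Finset.card_singleton, Finset.sdiff_empty,
      Finset.sdiff_singleton_eq_erase, Finset.prod_const_one, pow_zero, pow_one, mul_one, one_mul,
      neg_mul, Finset.sum_neg_distrib, mul_add, mul_neg, Finset.mul_sum, mul_left_comm a]
    abel
  rw [hexpand]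
  refine sum_mem fun m _ => sum_mem fun J hJ => ?_
  rw [Finset.mem_powersetCard] at hJ
  have hmem := hS (I \ J) Finset.sdiff_subset (by
    rw [Finset.sdiff_sdiff_eq_self hJ.1]
    omega)
  rcases neg_one_pow_eq_or A J.card with hsign | hsign <;> rw [hsign]
  · simpa using hmem
  · simpa using hmem

variable {n : Type*} [Fintype n]

theorem exists_ne_zero_forall_row_dotProduct_eq_zero (M : Matrix n n ℤ) (i : n) :
    ∃ v : n → ℤ, v ≠ 0 ∧ ∀ j ≠ i, M.row j ⬝ᵥ v = 0 := by
  classical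
  obtain ⟨v, hv, h⟩ := Matrix.exists_mulVec_eq_zero_iff.mpr
    (Matrix.det_eq_zero_of_row_eq_zero (A := M.updateRow i 0) i (by simp))
  refine ⟨v, hv, fun j hj => ?_⟩
  have hj0 := congrFun h j
  rwa [Matrix.mulVec, Matrix.updateRow_ne hj] at hj0

theorem exists_finset_forall_prod_halfSpaceIndicator_add_sub_mem (M : Matrix n n ℤ) :
    ∃ V : Finset (n → ℤ), 0 ∉ V ∧ ∀ t a : n → ℝ,
      (fun x => ∏ i, (halfSpaceIndicator (M.row i) (t i) x + a i)) - coneIndicator M t ∈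
        invariantSpan ℝ (V : Set (n → ℤ)) := by
  classical
  choose v hv0 hv using exists_ne_zero_forall_row_dotProduct_eq_zero M
  refine ⟨Finset.univ.image v, by simp [hv0], fun t a => ?_⟩
  have hexpand : (fun x => ∏ i, (halfSpaceIndicator (M.row i) (t i) x + a i)) - coneIndicator M t =
      ∑ T ∈ (Finset.univ : Finset n).powerset.erase Finset.univ, fun x =>
        (∏ i ∈ T, halfSpaceIndicator (M.row i) (t i) x) * ∏ i ∈ Finset.univ \ T, a i := by
    ext x
    rw [Pi.sub_apply, Finset.prod_add, Finset.sum_apply,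
      ← Finset.add_sum_erase _ _ (Finset.mem_powerset_self _), coneIndicator, Finset.prod_apply]
    simp
  rw [hexpand]
  refine Submodule.sum_mem _ fun T hT => ?_
  obtain ⟨i, hi⟩ : ∃ i, i ∉ T := by
    by_contra! h
    exact Finset.ne_of_mem_erase hT (Finset.eq_univ_of_forall h)
  refine Submodule.subset_span ⟨v i, by simp, fun x => ?_⟩
  exact congrArg (· * _) <| prod_halfSpaceIndicator_add_of_dotProduct_eq_zero
    (fun j hj => hv i j (ne_of_mem_of_not_mem hj hi)) t x

variable [DecidableEq n] {M : Matrix n n ℤ}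

theorem exists_smul_eq_sum_smul_row (hM : M.det ≠ 0) (hu : ¬IsUnit M.det) :
    ∃ (l : n → ℤ) (I : Finset n) (c : n → ℤ), I.Nonempty ∧
      (∀ i ∈ I, 0 < c i ∧ c i < |M.det|) ∧ |M.det| • l = ∑ i ∈ I, c i • M.row i := by
  rw [← Matrix.isUnit_iff_isUnit_det, ← Matrix.vecMul_surjective_iff_isUnit] at hu
  simp only [Function.Surjective, not_forall, not_exists] at hu
  obtain ⟨y, hy⟩ := hu
  obtain ⟨p, hp⟩ : ∃ p : n → ℤ, |M.det| • y = p ᵥ* M := by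
    have hcramer := Matrix.mulVec_cramer Mᵀ y
    rw [Matrix.mulVec_transpose, Matrix.det_transpose] at hcramer
    rcases abs_choice M.det with hsign | hsign <;> rw [hsign]
    · exact ⟨_, hcramer.symm⟩
    · exact ⟨-Mᵀ.cramer y, by rw [Matrix.neg_vecMul, hcramer, neg_smul]⟩
  have hpos : 0 < |M.det| := abs_pos.mpr hM
  obtain ⟨l, hl0, hl⟩ : ∃ l ≠ 0, |M.det| • l = (fun i => p i % |M.det|) ᵥ* M := by
    refine ⟨y - (fun i => p i / |M.det|) ᵥ* M, sub_ne_zero.mpr (Ne.symm (hy _)), ?_⟩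
    rw [smul_sub, hp, ← Matrix.smul_vecMul, ← Matrix.sub_vecMul]
    congr 1
    ext i
    exact sub_eq_of_eq_add (Int.emod_add_mul_ediv _ _).symm
  have hmod0 (i : n) : 0 ≤ p i % |M.det| := Int.emod_nonneg _ hpos.ne'
  refine ⟨l, Finset.univ.filter fun i => p i % |M.det| ≠ 0, fun i => p i % |M.det|, ?_,
    fun i hi => ⟨?_, ?_⟩, ?_⟩
  · by_contra! hempty
    have hp0 : (fun i => p i % |M.det|) = 0 := by
      simpa [Finset.filter_eq_empty_iff, funext_iff] using hempty
    rw [hp0, Matrix.zero_vecMul, smul_eq_zero_iff_right hpos.ne'] at hl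
    exact hl0 hl
  · exact (hmod0 i).lt_of_ne' (Finset.mem_filter.mp hi).2
  · exact Int.emod_lt_of_pos _ hpos
  · rw [hl, Matrix.vecMul_eq_sum, Finset.sum_filter_of_ne]
    · rfl
    · intro i _ hi hi0
      simp [hi0] at hi

theorem abs_det_updateRow_eq {l : n → ℤ} {I : Finset n} {c : n → ℤ} (hM : M.det ≠ 0)
    (hl : |M.det| • l = ∑ i ∈ I, c i • M.row i) {i : n} (hi : i ∈ I) :
    |(M.updateRow i l).det| = |c i| := by
  have hsum : |M.det| • l = ∑ k, (if k ∈ I then c k else 0) • M k := by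
    simp only [ite_smul, zero_smul, Finset.sum_ite_mem, Finset.univ_inter]
    exact hl
  have hdet : |M.det| * (M.updateRow i l).det = c i * M.det := by
    rw [← Matrix.det_updateRow_smul, hsum, Matrix.det_updateRow_sum, if_pos hi, smul_eq_mul]
  have habs := congrArg abs hdet
  rw [abs_mul, abs_mul, abs_abs, mul_comm] at habs
  exact mul_right_cancel₀ (abs_ne_zero.mpr hM) habs

theorem coneIndicator_updateRow_update (i : n) (l : n → ℤ) (t : n → ℝ) (u : ℝ) :
    coneIndicator (M.updateRow i l) (Function.update t i u) =
      halfSpaceIndicator l u * ∏ j ∈ Finset.univ.erase i, halfSpaceIndicator (M.row j) (t j) := by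
  rw [coneIndicator, ← Finset.mul_prod_erase _ _ (Finset.mem_univ i)]
  congr 1
  · simp [Matrix.row]
  · refine Finset.prod_congr rfl fun j hj => ?_
    simp [Matrix.row, Finset.ne_of_mem_erase hj]

/-- One step of Barvinok's decomposition of a simplicial cone, modulo cones with lines. -/
theorem coneIndicator_sub_sum_updateRow_mem {V : Set (n → ℤ)} {I : Finset n} {δ : ℤ} {l c : n → ℤ}
    {t : n → ℝ} {u : ℝ} (hI : I.Nonempty) (hδ : 0 < δ) (hc : ∀ i ∈ I, 0 < c i)
    (hl : δ • l = ∑ i ∈ I, c i • M.row i) (hu : δ * u = ∑ i ∈ I, c i * t i)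
    (hV : ∀ i j, i ≠ j → ∃ v ∈ V, l ⬝ᵥ v = 0 ∧ ∀ k, k ≠ i → k ≠ j → M.row k ⬝ᵥ v = 0) :
    coneIndicator M t - ∑ i ∈ I, coneIndicator (M.updateRow i l) (Function.update t i u) ∈
      invariantSpan ℝ V := by
  set f : n → (n → ℤ) → ℝ := fun i => halfSpaceIndicator (M.row i) (t i)
  set a : (n → ℤ) → ℝ := (∏ i ∈ Iᶜ, f i) * halfSpaceIndicator l u with ha
  have hzero : a * ∏ i ∈ I, (f i - 1) = 0 := by
    rw [ha, mul_assoc, halfSpaceIndicator_mul_prod_sub_one hI hδ hc hl hu, mul_zero]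
  have hcone : a * ∏ i ∈ I, f i = coneIndicator M t := by
    rw [ha, mul_assoc, halfSpaceIndicator_mul_prod_eq_prod hδ hc hl hu, Finset.prod_compl_mul_prod]
    rfl
  have hupdate (i : n) (hi : i ∈ I) :
      a * ∏ j ∈ I.erase i, f j = coneIndicator (M.updateRow i l) (Function.update t i u) := by
    have hunion : Finset.univ.erase i = Iᶜ ∪ I.erase i := by
      ext j
      simp only [Finset.mem_erase, Finset.mem_univ, Finset.mem_union, Finset.mem_compl]
      grind
    rw [coneIndicator_updateRow_update, hunion, Finset.prod_union (Finset.disjoint_left.mpr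
      fun j hj hj' => Finset.mem_compl.mp hj (Finset.mem_of_mem_erase hj')), ha]
    ring
  have hmem := mul_prod_sub_one_sub_mem (S := (invariantSpan ℝ V).toAddSubgroup) hI (a := a)
    (f := f) fun J _ hcard => by
      obtain ⟨i, hi, j, hj, hij⟩ := Finset.one_lt_card.mp hcard
      rw [Finset.mem_sdiff] at hi hj
      obtain ⟨v, hv, hlv, hMv⟩ := hV i j hij
      have hinv {s : Finset n} (hi : i ∉ s) (hj : j ∉ s) (x : n → ℤ) :
          ∏ k ∈ s, f k (x + v) = ∏ k ∈ s, f k x :=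
        prod_halfSpaceIndicator_add_of_dotProduct_eq_zero
          (fun k hk => hMv k (ne_of_mem_of_not_mem hk hi) (ne_of_mem_of_not_mem hk hj)) t x
      refine Submodule.subset_span ⟨v, hv, fun x => ?_⟩
      simp only [ha, Pi.mul_apply, Finset.prod_apply, hinv hi.2 hj.2,
        hinv (Finset.notMem_compl.mpr hi.1) (Finset.notMem_compl.mpr hj.1),
        halfSpaceIndicator_add_of_dotProduct_eq_zero hlv]
  rw [hzero, zero_sub, neg_mem_iff, hcone, Finset.sum_congr rfl hupdate] at hmem
  exact hmem

theorem exists_finset_forall_coneIndicator_sub_sum_updateRow_mem {I : Finset n} {δ : ℤ}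
    {l c : n → ℤ} (hI : I.Nonempty) (hδ : 0 < δ) (hc : ∀ i ∈ I, 0 < c i)
    (hl : δ • l = ∑ i ∈ I, c i • M.row i) :
    ∃ V : Finset (n → ℤ), 0 ∉ V ∧ ∀ (t : n → ℝ) (u : ℝ), δ * u = ∑ i ∈ I, c i * t i →
      coneIndicator M t - ∑ i ∈ I, coneIndicator (M.updateRow i l) (Function.update t i u) ∈
        invariantSpan ℝ (V : Set (n → ℤ)) := by
  choose v hv0 hv using fun i j =>
    exists_ne_zero_forall_row_dotProduct_eq_zero (M.updateRow i l) j
  refine ⟨Finset.univ.image fun p : n × n => v p.1 p.2, by simp [hv0], fun t u hu =>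
    coneIndicator_sub_sum_updateRow_mem hI hδ hc hl hu fun i j hij => ⟨v i j, by simp, ?_, ?_⟩⟩
  · simpa [Matrix.row] using hv i j i hij
  · intro k hki hkj
    simpa [Matrix.row, hki] using hv i j k hkj

end ConeDecomposition

/-! ### Regularized sums with step-polynomial coefficients -/

section StepExpansions

open scoped Matrix

variable {n ι : Type*} [Fintype n] {N : ℕ}

/-- For every additive map `ℓ` avoiding finitely many zeros, the functions `f b` have regularized
exponential sums whose coefficients of degree `k` are step polynomials in `b` of total degree at
most `k`. -/
def HasStepExpansion (f : (Fin N → ℝ) → (n → ℤ) → ℝ) : Prop :=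
  ∃ (Ψ : Finset (Fin N → ℚ)) (V : Finset (n → ℤ)), 0 ∉ V ∧
    ∀ ℓ : (n → ℤ) →+ ℝ, (∀ v ∈ V, ℓ v ≠ 0) →
      ∃ S : (Fin N → ℝ) → PowerSeries ℝ,
        (∀ b, (f b, S b) ∈ regularizedSum ℓ (Fintype.card n)) ∧
        ∀ k, (fun b => PowerSeries.coeff k (S b)) ∈ stepFiltration Ψ k

theorem coeff_expSeries_mul_mem_stepFiltration {Ψ : Finset (Fin N → ℚ)} {E : (Fin N → ℝ) → ℝ}
    (hE : E ∈ stepFiltration Ψ 1) (Q : PowerSeries ℝ) (k : ℕ) :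
    (fun b => PowerSeries.coeff k (expSeries (E b) * Q)) ∈ stepFiltration Ψ k := by
  have hcoeff : (fun b => PowerSeries.coeff k (expSeries (E b) * Q)) =
      ∑ p ∈ Finset.HasAntidiagonal.antidiagonal k,
        ((p.1.factorial : ℝ)⁻¹ * PowerSeries.coeff p.2 Q) • E ^ p.1 := by
    ext b
    rw [PowerSeries.coeff_mul, Finset.sum_apply]
    refine Finset.sum_congr rfl fun p _ => ?_
    simp only [coeff_expSeries, one_div, map_inv₀, map_natCast, Pi.smul_apply, Pi.pow_apply,
      smul_eq_mul]
    ring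
  rw [hcoeff]
  refine Submodule.sum_mem _ fun p hp => Submodule.smul_mem _ _ ?_
  exact stepFiltration_mono (Finset.HasAntidiagonal.antidiagonal.fst_le hp)
    (pow_mem_stepFiltration hE p.1)

namespace HasStepExpansion

variable {f g : (Fin N → ℝ) → (n → ℤ) → ℝ} {V : Finset (n → ℤ)}

theorem of_mem_invariantSpan (hV : 0 ∉ V)
    (hf : ∀ b, f b ∈ invariantSpan ℝ (V : Set (n → ℤ))) : HasStepExpansion f :=
  ⟨∅, V, hV, fun _ hℓ => ⟨0, fun b => mem_regularizedSum_of_mem_invariantSpan hℓ (hf b),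
    fun k => by
      simp only [Pi.zero_apply, map_zero]
      exact Submodule.zero_mem _⟩⟩

theorem zero : HasStepExpansion (0 : (Fin N → ℝ) → (n → ℤ) → ℝ) :=
  of_mem_invariantSpan (Finset.notMem_empty 0) fun _ => Submodule.zero_mem _

theorem add (hf : HasStepExpansion f) (hg : HasStepExpansion g) : HasStepExpansion (f + g) := by
  classical
  obtain ⟨Ψ, V, hV, hf⟩ := hf
  obtain ⟨Ψ', V', hV', hg⟩ := hg
  refine ⟨Ψ ∪ Ψ', V ∪ V', Finset.notMem_union.mpr ⟨hV, hV'⟩, fun ℓ hℓ => ?_⟩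
  obtain ⟨S, hS, hk⟩ := hf ℓ fun v hv => hℓ v (Finset.mem_union_left _ hv)
  obtain ⟨S', hS', hk'⟩ := hg ℓ fun v hv => hℓ v (Finset.mem_union_right _ hv)
  refine ⟨S + S', fun b => Submodule.add_mem _ (hS b) (hS' b), fun k => ?_⟩
  simp only [Pi.add_apply, map_add]
  exact Submodule.add_mem _ (stepFiltration_mono_left Finset.subset_union_left (hk k))
    (stepFiltration_mono_left Finset.subset_union_right (hk' k))

theorem sum {s : Finset ι} {F : ι → (Fin N → ℝ) → (n → ℤ) → ℝ}
    (h : ∀ i ∈ s, HasStepExpansion (F i)) : HasStepExpansion (∑ i ∈ s, F i) :=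
  Finset.sum_induction F HasStepExpansion (fun _ _ => add) zero h

theorem of_sub_mem_invariantSpan (hf : HasStepExpansion f) (hV : 0 ∉ V)
    (h : ∀ b, g b - f b ∈ invariantSpan ℝ (V : Set (n → ℤ))) : HasStepExpansion g := by
  have hg := hf.add (of_mem_invariantSpan (f := g - f) hV h)
  rwa [add_sub_cancel] at hg

theorem exists_sum_mul_pow_eq (hf : HasStepExpansion f) :
    ∃ (Ψ : Finset (Fin N → ℚ)) (V : Finset (n → ℤ)), 0 ∉ V ∧
      ∀ (ℓ : (n → ℤ) →+ ℝ) (m : ℕ), (∀ v ∈ V, ℓ v ≠ 0) →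
        ∃ F ∈ stepFiltration Ψ (Fintype.card n + m), ∀ (b : Fin N → ℝ) (p : (n → ℤ) →₀ ℝ),
          f b = p → F b = p.sum fun x a => a * ℓ x ^ m := by
  obtain ⟨Ψ, V, hV, hS⟩ := hf
  refine ⟨Ψ, V, hV, fun ℓ m hℓ => ?_⟩
  obtain ⟨S, hS, hk⟩ := hS ℓ hℓ
  refine ⟨_, Submodule.smul_mem _ (m.factorial : ℝ) (hk (Fintype.card n + m)), fun b p hp => ?_⟩
  have hp' : (f b, PowerSeries.X ^ Fintype.card n * expSum ℓ (.ofCoeff p)) ∈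
      regularizedSum ℓ (Fintype.card n) := hp ▸ coeff_mem_regularizedSum (.ofCoeff p)
  have hmem := Submodule.sub_mem _ (hS b) hp'
  rw [Prod.mk_sub_mk, sub_self] at hmem
  rw [Pi.smul_apply, sub_eq_zero.mp (eq_zero_of_mem_regularizedSum hmem), add_comm,
    PowerSeries.coeff_X_pow_mul, smul_eq_mul, factorial_mul_coeff_expSum]

variable [DecidableEq n]

theorem coneIndicator_of_isUnit_det {U : Matrix n n ℤ} (hU : IsUnit U.det)
    (η : n → Fin N → ℚ) :
    HasStepExpansion fun b => coneIndicator U fun i => ∑ j, (η i j : ℝ) * b j := by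
  have hcol (j : n) : U⁻¹.col j ≠ 0 := fun h => by
    simpa [h] using row_dotProduct_nonsing_inv_col hU j j
  refine ⟨Finset.univ.image η, Finset.univ.image U⁻¹.col, by simpa using hcol, fun ℓ hℓ => ?_⟩
  obtain ⟨Q, hQ⟩ := exists_coneIndicator_mem_regularizedSum (ℓ := ℓ) hU fun j =>
    hℓ _ (Finset.mem_image_of_mem _ (Finset.mem_univ j))
  refine ⟨_, fun b => hQ _, coeff_expSeries_mul_mem_stepFiltration ?_ Q⟩
  have hE : (fun b : Fin N → ℝ => ∑ i, ⌊∑ j, (η i j : ℝ) * b j⌋ * ℓ (U⁻¹.col i)) =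
      ∑ i, ℓ (U⁻¹.col i) • fun b : Fin N → ℝ => (⌊∑ j, (η i j : ℝ) * b j⌋ : ℝ) := by
    ext b
    simp [mul_comm]
  rw [hE]
  exact Submodule.sum_mem _ fun i _ => Submodule.smul_mem _ _ <|
    floor_mem_stepFiltration (Finset.mem_image_of_mem _ (Finset.mem_univ i))

theorem coneIndicator {M : Matrix n n ℤ} (hM : M.det ≠ 0) (η : n → Fin N → ℚ) :
    HasStepExpansion fun b => coneIndicator M fun i => ∑ j, (η i j : ℝ) * b j := by
  induction hk : M.det.natAbs using Nat.strong_induction_on generalizing M η with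
  | _ k ih =>
    by_cases hu : IsUnit M.det
    · exact coneIndicator_of_isUnit_det hu η
    obtain ⟨l, I, c, hI, hc, hl⟩ := exists_smul_eq_sum_smul_row hM hu
    have hpos : 0 < |M.det| := abs_pos.mpr hM
    obtain ⟨V, hV, hstep⟩ := exists_finset_forall_coneIndicator_sub_sum_updateRow_mem hI hpos
      (fun i hi => (hc i hi).1) hl
    set η₀ : Fin N → ℚ := (|M.det| : ℚ)⁻¹ • ∑ i ∈ I, (c i : ℚ) • η i with hη₀
    have hsum : HasStepExpansion (∑ i ∈ I, fun b => _root_.coneIndicator (M.updateRow i l)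
        fun i' => ∑ j, (Function.update η i η₀ i' j : ℝ) * b j) := by
      refine sum fun i hi => ?_
      have hdet : |(M.updateRow i l).det| = c i := by
        rw [abs_det_updateRow_eq hM hl hi, abs_of_pos (hc i hi).1]
      refine ih _ ?_ (abs_pos.mp (hdet ▸ (hc i hi).1)) _ rfl
      rw [← hk, Int.natAbs_lt_iff_sq_lt, sq_lt_sq, hdet]
      exact (hc i hi).2
    refine hsum.of_sub_mem_invariantSpan hV fun b => ?_
    have hη₀b : (|M.det| : ℤ) * ∑ j, (η₀ j : ℝ) * b j = ∑ i ∈ I, c i * ∑ j, (η i j : ℝ) * b j := by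
      have hδ : ((|M.det| : ℤ) : ℝ) ≠ 0 := mod_cast hpos.ne'
      simp only [hη₀, Pi.smul_apply, Finset.sum_apply, smul_eq_mul, Rat.cast_mul, Rat.cast_inv,
        Rat.cast_sum, Rat.cast_intCast, ← Int.cast_abs, mul_assoc, ← Finset.mul_sum,
        mul_inv_cancel_left₀ hδ, Finset.sum_mul]
      rw [Finset.sum_comm]
      simp only [Finset.mul_sum]
    have hupdate (i : n) : (fun i' => ∑ j, (Function.update η i η₀ i' j : ℝ) * b j) =
        Function.update (fun i' => ∑ j, (η i' j : ℝ) * b j) i (∑ j, (η₀ j : ℝ) * b j) := by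
      ext i'
      obtain rfl | hi := eq_or_ne i' i
      · simp
      · simp [hi]
    simpa only [Finset.sum_apply, hupdate] using hstep _ _ hη₀b

theorem prod_halfSpaceIndicator_add {A : Matrix (Fin N) n ℤ} {σ : n → Fin N}
    (hσ : (A.submatrix σ id).det ≠ 0) (a : n → ℝ) :
    HasStepExpansion fun b x =>
      ∏ i, (halfSpaceIndicator (A.row (σ i)) (b (σ i)) x + a i) := by
  obtain ⟨V, hV, h⟩ := exists_finset_forall_prod_halfSpaceIndicator_add_sub_mem (A.submatrix σ id)
  have hcone := coneIndicator hσ fun i => Pi.single (σ i) (1 : ℚ)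
  refine hcone.of_sub_mem_invariantSpan hV fun b => ?_
  have hb (i : n) : ∑ j, ((Pi.single (σ i) (1 : ℚ) : Fin N → ℚ) j : ℝ) * b j = b (σ i) := by
    rw [Finset.sum_eq_single (σ i)] <;> simp +contextual
  simp only [hb]
  exact h (fun i => b (σ i)) a

end HasStepExpansion

end StepExpansions

/-! ### Polarized sums over the vertices of a polytope -/

section PivotSystems

open Filter Topology

/-- The sum over `𝓕` of the products `∏ j ∈ B, (θ (w B j) - n j)`. When `θ` is the indicator
function of a half-space and the `n j` are indicator functions of the facet inequalities, the
product is, up to sign, the indicator function of a vertex cone with some of its edges flipped. -/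
noncomputable def polarSum {ι V : Type*} (𝓕 : Finset (Finset ι)) (w : Finset ι → ι → V) (n : ι → ℝ)
    (θ : V → ℝ) : ℝ :=
  ∑ B ∈ 𝓕, ∏ j ∈ B, (θ (w B j) - n j)

theorem polarSum_congr {ι V : Type*} {𝓕 : Finset (Finset ι)} {w : Finset ι → ι → V} {θ θ' : V → ℝ}
    (h : ∀ B ∈ 𝓕, ∀ i ∈ B, θ (w B i) = θ' (w B i)) (n : ι → ℝ) :
    polarSum 𝓕 w n θ = polarSum 𝓕 w n θ' :=
  Finset.sum_congr rfl fun B hB => Finset.prod_congr rfl fun i hi => by rw [h B hB i hi]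

variable {ι V : Type*} [AddCommGroup V] [Module ℝ V]

/-- The indicator function of the open half-space `ξ > 0`. -/
noncomputable def posIndicator (ξ : Module.Dual ℝ V) (v : V) : ℝ :=
  if 0 < ξ v then 1 else 0

/-- The indicator function of the vectors on which `ξ + ε ζ` is positive for all small `ε > 0`. -/
noncomputable def lexIndicator (ξ ζ : Module.Dual ℝ V) (v : V) : ℝ :=
  if 0 < ξ v ∨ ξ v = 0 ∧ 0 < ζ v then 1 else 0

theorem lexIndicator_eq_posIndicator {ξ : Module.Dual ℝ V} {v : V} (h : ξ v ≠ 0)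
    (ζ : Module.Dual ℝ V) : lexIndicator ξ ζ v = posIndicator ξ v := by
  simp [lexIndicator, posIndicator, h]

theorem lexIndicator_sub_lexIndicator_neg_of_apply_eq_zero {ξ : Module.Dual ℝ V} {v : V}
    (h : ξ v = 0) (ζ : Module.Dual ℝ V) :
    lexIndicator ξ ζ v - lexIndicator ξ (-ζ) v = SignType.sign (ζ v) := by
  obtain hζ | hζ | hζ := lt_trichotomy (ζ v) 0
  · simp [lexIndicator, h, hζ, hζ.not_gt]
  · simp [lexIndicator, h, hζ]
  · simp [lexIndicator, h, hζ, hζ.not_gt]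

theorem lexIndicator_sub_lexIndicator_neg_smul {r : ℝ} (hr : 0 < r) (ξ ζ : Module.Dual ℝ V)
    (v : V) :
    lexIndicator ξ ζ (-r • v) - lexIndicator ξ (-ζ) (-r • v) =
      -(lexIndicator ξ ζ v - lexIndicator ξ (-ζ) v) := by
  by_cases hv : ξ v = 0
  · have hv' : ξ (-r • v) = 0 := by rw [map_smul, hv, smul_zero]
    rw [lexIndicator_sub_lexIndicator_neg_of_apply_eq_zero hv,
      lexIndicator_sub_lexIndicator_neg_of_apply_eq_zero hv', map_smul, smul_eq_mul, sign_mul,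
      sign_neg (neg_neg_of_pos hr)]
    simp
  · have hv' : ξ (-r • v) ≠ 0 := by simpa [hr.ne'] using hv
    simp only [lexIndicator_eq_posIndicator hv, lexIndicator_eq_posIndicator hv', sub_self,
      neg_zero]

theorem eventually_lexIndicator_add_smul {ξ η ζ : Module.Dual ℝ V} {v : V}
    (h : η v = 0 → ζ v = 0) :
    ∀ᶠ ε : ℝ in 𝓝[>] 0, lexIndicator (ξ + ε • η) ζ v = lexIndicator ξ η v := by
  have hlim : Tendsto (fun ε : ℝ => (ξ + ε • η) v) (𝓝[>] 0) (𝓝 (ξ v)) := by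
    have hcont : Continuous fun ε : ℝ => ξ v + ε * η v := by fun_prop
    simpa using (hcont.tendsto 0).mono_left nhdsWithin_le_nhds
  obtain hv | hv | hv := lt_trichotomy (ξ v) 0
  · filter_upwards [hlim.eventually_lt_const hv] with ε hε
    simp only [lexIndicator, hv.not_gt, hv.ne, hε.not_gt, hε.ne, false_and, or_false]
  · filter_upwards [self_mem_nhdsWithin] with ε (hε : 0 < ε)
    by_cases hη : η v = 0
    · simp [lexIndicator, hv, hη, h hη]
    · simp [lexIndicator, hv, hη, hε, hε.ne']
  · filter_upwards [hlim.eventually_const_lt hv] with ε hε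
    simp only [lexIndicator, hv, hε, true_or]

theorem prod_lexIndicator_sub_prod_lexIndicator_neg [DecidableEq ι] {B : Finset ι} (u : ι → V)
    (n : ι → ℝ) (ζ : Module.Dual ℝ V) {ξ : Module.Dual ℝ V}
    (hξ : ∀ i ∈ B, ∀ j ∈ B, ξ (u i) = 0 → ξ (u j) = 0 → i = j) :
    ∏ j ∈ B, (lexIndicator ξ ζ (u j) - n j) - ∏ j ∈ B, (lexIndicator ξ (-ζ) (u j) - n j) =
      ∑ i ∈ B, (lexIndicator ξ ζ (u i) - lexIndicator ξ (-ζ) (u i)) *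
        ∏ j ∈ B.erase i, (posIndicator ξ (u j) - n j) := by
  have hprod (η : Module.Dual ℝ V) (T : Finset ι) (hT : ∀ j ∈ T, ξ (u j) ≠ 0) :
      ∏ j ∈ T, (lexIndicator ξ η (u j) - n j) = ∏ j ∈ T, (posIndicator ξ (u j) - n j) :=
    Finset.prod_congr rfl fun j hj => by rw [lexIndicator_eq_posIndicator (hT j hj)]
  have hjump (j : ι) (hj : ξ (u j) ≠ 0) : (lexIndicator ξ ζ (u j) - lexIndicator ξ (-ζ) (u j)) *
      ∏ l ∈ B.erase j, (posIndicator ξ (u l) - n l) = 0 := by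
    simp only [lexIndicator_eq_posIndicator hj, sub_self, zero_mul]
  by_cases hcrit : ∃ i ∈ B, ξ (u i) = 0
  · obtain ⟨i, hi, hi0⟩ := hcrit
    have hne (j : ι) (hj : j ∈ B.erase i) : ξ (u j) ≠ 0 := fun hj0 =>
      Finset.ne_of_mem_erase hj (hξ j (Finset.mem_of_mem_erase hj) i hi hj0 hi0)
    rw [Finset.sum_eq_single_of_mem i hi fun j hj hji =>
        hjump j (hne j (Finset.mem_erase.mpr ⟨hji, hj⟩)),
      ← Finset.mul_prod_erase B _ hi, ← Finset.mul_prod_erase B _ hi, hprod _ _ hne,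
      hprod _ _ hne]
    ring
  · push Not at hcrit
    rw [hprod _ _ hcrit, hprod _ _ hcrit, sub_self,
      Finset.sum_eq_zero fun j hj => hjump j (hcrit j hj)]

/-- The edge in direction `w B i` from the vertex `B` ends at the vertex `B'`, where its direction
is `w B' k`. -/
structure AreOppositeEdges (𝓕 : Finset (Finset ι)) [DecidableEq ι] (B : Finset ι) (i : ι)
    (B' : Finset ι) (k : ι) : Prop where
  left_mem : B ∈ 𝓕
  mem_left : i ∈ B
  right_mem : B' ∈ 𝓕
  mem_right : k ∈ B'
  ne : B' ≠ B
  erase_eq : B'.erase k = B.erase i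

/-- A family `𝓕` of index sets of bases of the dual space, with `w B` the basis dual to
`(μ j)_{j ∈ B}`, is closed under pivoting: every edge has an opposite edge, and the directions at
its two ends are related as for a simple polytope. -/
structure IsPivotSystem [DecidableEq ι] (μ : ι → Module.Dual ℝ V) (𝓕 : Finset (Finset ι))
    (w : Finset ι → ι → V) : Prop where
  dual : ∀ B ∈ 𝓕, ∀ i ∈ B, ∀ j ∈ B, μ i (w B j) = if i = j then 1 else 0
  exists_areOppositeEdges : ∀ B ∈ 𝓕, ∀ i ∈ B, ∃ B' k, AreOppositeEdges 𝓕 B i B' k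
  opposite : ∀ B i B' k, AreOppositeEdges 𝓕 B i B' k → ∃ r : ℝ, 0 < r ∧ w B' k = -r • w B i
  congr : ∀ B i B' k, AreOppositeEdges 𝓕 B i B' k →
    ∀ j ∈ B.erase i, ∃ c : ℝ, w B' j = w B j + c • w B i

/-- The linear form `ξ` does not vanish on any edge direction. -/
def IsGenericForm (𝓕 : Finset (Finset ι)) (w : Finset ι → ι → V) (ξ : Module.Dual ℝ V) : Prop :=
  ∀ B ∈ 𝓕, ∀ i ∈ B, ξ (w B i) ≠ 0

variable [DecidableEq ι] {μ : ι → Module.Dual ℝ V} {𝓕 : Finset (Finset ι)}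
  {w : Finset ι → ι → V} {B B' B'' : Finset ι} {i j k k' : ι}

namespace AreOppositeEdges

theorem symm (h : AreOppositeEdges 𝓕 B i B' k) : AreOppositeEdges 𝓕 B' k B i :=
  ⟨h.right_mem, h.mem_right, h.left_mem, h.mem_left, h.ne.symm, h.erase_eq.symm⟩

theorem trans (h : AreOppositeEdges 𝓕 B i B' k) (h' : AreOppositeEdges 𝓕 B' k B'' k')
    (hne : B'' ≠ B) : AreOppositeEdges 𝓕 B i B'' k' :=
  ⟨h.left_mem, h.mem_left, h'.right_mem, h'.mem_right, hne, h'.erase_eq.trans h.erase_eq⟩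

theorem notMem_left (h : AreOppositeEdges 𝓕 B i B' k) : k ∉ B := by
  intro hkB
  have hki : k = i := by
    by_contra hki
    exact Finset.notMem_erase k B' (h.erase_eq ▸ Finset.mem_erase.mpr ⟨hki, hkB⟩)
  exact h.ne (by rw [← Finset.insert_erase h.mem_right, h.erase_eq, hki,
    Finset.insert_erase h.mem_left])

theorem notMem_right (h : AreOppositeEdges 𝓕 B i B' k) : i ∉ B' :=
  h.symm.notMem_left

theorem mem_right_of_mem_erase (h : AreOppositeEdges 𝓕 B i B' k) (hj : j ∈ B.erase i) : j ∈ B' :=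
  Finset.mem_of_mem_erase (h.erase_eq ▸ hj)

end AreOppositeEdges

namespace IsPivotSystem

theorem ne_zero (h : IsPivotSystem μ 𝓕 w) (hB : B ∈ 𝓕) (hi : i ∈ B) : w B i ≠ 0 := by
  intro h0
  simpa [h0] using h.dual B hB i hi i hi

theorem smul_sub_smul_ne_zero (h : IsPivotSystem μ 𝓕 w) (hB : B ∈ 𝓕) (hi : i ∈ B) (hj : j ∈ B)
    (hij : i ≠ j) {a : ℝ} (ha : a ≠ 0) (c : ℝ) : a • w B j - c • w B i ≠ 0 := by
  intro h0
  have hμ := congrArg (μ j) h0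
  simp [h.dual B hB j hj j hj, h.dual B hB j hj i hi, hij.symm, ha] at hμ

theorem opposite_unique (h : IsPivotSystem μ 𝓕 w) (h₁ : AreOppositeEdges 𝓕 B i B' k)
    (h₂ : AreOppositeEdges 𝓕 B' k B'' k') : B'' = B ∧ k' = i := by
  have hB : B'' = B := by
    by_contra hne
    obtain ⟨r₁, hr₁, hw₁⟩ := h.opposite _ _ _ _ h₁
    obtain ⟨r₂, hr₂, hw₂⟩ := h.opposite _ _ _ _ h₂
    obtain ⟨r₃, hr₃, hw₃⟩ := h.opposite _ _ _ _ (h₁.trans h₂ hne)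
    rw [hw₁, hw₃, smul_smul] at hw₂
    have hr := smul_left_injective ℝ (h.ne_zero h₁.left_mem h₁.mem_left) hw₂
    linarith [mul_pos hr₂ hr₁, neg_mul_neg r₂ r₁]
  subst hB
  exact ⟨rfl, Finset.erase_injOn B'' h₂.mem_right h₁.mem_left (h₂.erase_eq.trans h₁.erase_eq)⟩

theorem sum_eq_zero (h : IsPivotSystem μ 𝓕 w) {F : Finset ι → ι → ℝ}
    (hF : ∀ B i B' k, AreOppositeEdges 𝓕 B i B' k → F B i + F B' k = 0) :
    ∑ B ∈ 𝓕, ∑ i ∈ B, F B i = 0 := by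
  have hex (p : (_ : Finset ι) × ι) (hp : p ∈ 𝓕.sigma id) :
      ∃ q : (_ : Finset ι) × ι, AreOppositeEdges 𝓕 p.1 p.2 q.1 q.2 := by
    obtain ⟨hB, hi⟩ := Finset.mem_sigma.mp hp
    obtain ⟨B', k, hk⟩ := h.exists_areOppositeEdges _ hB _ hi
    exact ⟨⟨B', k⟩, hk⟩
  choose σ hσ using hex
  have hσmem (p : (_ : Finset ι) × ι) (hp : p ∈ 𝓕.sigma id) : σ p hp ∈ 𝓕.sigma id :=
    Finset.mem_sigma.mpr ⟨(hσ p hp).right_mem, (hσ p hp).mem_right⟩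
  rw [Finset.sum_sigma']
  refine Finset.sum_involution σ (fun p hp => hF _ _ _ _ (hσ p hp))
    (fun p hp _ hpp => (hσ p hp).ne (by rw [hpp])) hσmem fun p hp => ?_
  obtain ⟨hB, hi⟩ := h.opposite_unique (hσ p hp) (hσ _ (hσmem p hp))
  exact Sigma.ext hB (heq_of_eq hi)

/-- The jump of the polarized sum when crossing a wall at which at most one edge at each vertex is
critical is a sum over edges, and opposite edges cancel. -/
theorem polarSum_lexIndicator_neg (h : IsPivotSystem μ 𝓕 w) (n : ι → ℝ) (ζ : Module.Dual ℝ V)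
    {ξ : Module.Dual ℝ V}
    (hξ : ∀ B ∈ 𝓕, ∀ i ∈ B, ∀ j ∈ B, ξ (w B i) = 0 → ξ (w B j) = 0 → i = j) :
    polarSum 𝓕 w n (lexIndicator ξ ζ) = polarSum 𝓕 w n (lexIndicator ξ (-ζ)) := by
  rw [← sub_eq_zero, polarSum, polarSum, ← Finset.sum_sub_distrib,
    Finset.sum_congr rfl fun B hB =>
      prod_lexIndicator_sub_prod_lexIndicator_neg (w B) n ζ (hξ B hB)]
  refine h.sum_eq_zero fun B i B' k hopp => ?_
  obtain ⟨r, hr, hw⟩ := h.opposite B i B' k hopp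
  rw [hopp.erase_eq, hw, lexIndicator_sub_lexIndicator_neg_smul hr]
  by_cases hi0 : ξ (w B i) = 0
  · have hrest : ∀ j ∈ B.erase i,
        posIndicator ξ (w B' j) - n j = posIndicator ξ (w B j) - n j := by
      intro j hj
      obtain ⟨c, hc⟩ := h.congr B i B' k hopp j hj
      rw [hc, posIndicator, map_add, map_smul, hi0, smul_zero, add_zero, posIndicator]
    rw [Finset.prod_congr rfl hrest]
    ring
  · simp only [lexIndicator_eq_posIndicator hi0, sub_self, neg_zero, zero_mul, add_zero]

theorem isLocallyConstant_polarSum_lexIndicator (h : IsPivotSystem μ 𝓕 w) (n : ι → ℝ)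
    {ξ ζ : Module.Dual ℝ V}
    (hξ : ∀ s : ℝ, ∀ B ∈ 𝓕, ∀ i ∈ B, ∀ j ∈ B,
      (ξ + s • ζ) (w B i) = 0 → (ξ + s • ζ) (w B j) = 0 → i = j) :
    IsLocallyConstant fun s : ℝ => polarSum 𝓕 w n (lexIndicator (ξ + s • ζ) ζ) := by
  have heventually (s : ℝ) {η : Module.Dual ℝ V} (hη : ∀ v, η v = 0 → ζ v = 0) :
      ∀ᶠ ε : ℝ in 𝓝[>] 0, polarSum 𝓕 w n (lexIndicator (ξ + s • ζ + ε • η) ζ) =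
        polarSum 𝓕 w n (lexIndicator (ξ + s • ζ) η) := by
    have hall : ∀ᶠ ε : ℝ in 𝓝[>] 0, ∀ B ∈ 𝓕, ∀ i ∈ B,
        lexIndicator (ξ + s • ζ + ε • η) ζ (w B i) = lexIndicator (ξ + s • ζ) η (w B i) := by
      simp only [eventually_all_finset]
      exact fun B _ i _ => eventually_lexIndicator_add_smul (hη _)
    exact hall.mono fun ε hε => polarSum_congr hε n
  rw [IsLocallyConstant.iff_eventually_eq]
  intro s
  rw [← nhdsNE_sup_pure s, ← nhdsLT_sup_nhdsGT]
  simp only [eventually_sup, eventually_pure, and_true]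
  constructor
  · have hlim : Tendsto (fun s' => s - s') (𝓝[<] s) (𝓝[>] 0) := by
      refine tendsto_nhdsWithin_of_tendsto_nhds_of_eventually_within _ ?_ ?_
      · simpa using ((continuous_sub_left s).tendsto s).mono_left nhdsWithin_le_nhds
      · filter_upwards [self_mem_nhdsWithin] with s' hs' using Set.mem_Ioi.mpr (sub_pos.mpr hs')
    filter_upwards [hlim.eventually (heventually s (η := -ζ) (by simp))] with s' hs'
    rw [h.polarSum_lexIndicator_neg n ζ (hξ s), ← hs']
    congr 2
    module
  · have hlim : Tendsto (fun s' => s' - s) (𝓝[>] s) (𝓝[>] 0) := by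
      refine tendsto_nhdsWithin_of_tendsto_nhds_of_eventually_within _ ?_ ?_
      · simpa using ((continuous_sub_right s).tendsto s).mono_left nhdsWithin_le_nhds
      · filter_upwards [self_mem_nhdsWithin] with s' hs' using Set.mem_Ioi.mpr (sub_pos.mpr hs')
    filter_upwards [hlim.eventually (heventually s fun _ => id)] with s' hs'
    rw [← hs']
    congr 2
    module

theorem polarSum_eq_of_cross_ne (h : IsPivotSystem μ 𝓕 w) (n : ι → ℝ) {ξ₀ ξ₁ : Module.Dual ℝ V}
    (h₀ : IsGenericForm 𝓕 w ξ₀) (h₁ : IsGenericForm 𝓕 w ξ₁)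
    (hcross : ∀ B ∈ 𝓕, ∀ i ∈ B, ∀ j ∈ B, i ≠ j →
      ξ₀ (w B i) * ξ₁ (w B j) ≠ ξ₀ (w B j) * ξ₁ (w B i)) :
    polarSum 𝓕 w n (posIndicator ξ₀) = polarSum 𝓕 w n (posIndicator ξ₁) := by
  have hconst := h.isLocallyConstant_polarSum_lexIndicator n (ξ := ξ₀) (ζ := ξ₁ - ξ₀)
    fun s B hB i hi j hj hi0 hj0 => by
      by_contra hij
      refine hcross B hB i hi j hj hij ?_
      simp only [LinearMap.add_apply, LinearMap.smul_apply, LinearMap.sub_apply,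
        smul_eq_mul] at hi0 hj0
      linear_combination (ξ₁ (w B j) - ξ₀ (w B j)) * hi0 - (ξ₁ (w B i) - ξ₀ (w B i)) * hj0
  have hlex {ξ : Module.Dual ℝ V} (hξ : IsGenericForm 𝓕 w ξ) :
      polarSum 𝓕 w n (lexIndicator ξ (ξ₁ - ξ₀)) = polarSum 𝓕 w n (posIndicator ξ) :=
    polarSum_congr (fun B hB i hi => lexIndicator_eq_posIndicator (hξ B hB i hi) _) n
  have h01 := hconst.apply_eq_of_preconnectedSpace 0 1
  rwa [zero_smul, add_zero, one_smul, add_sub_cancel, hlex h₀, hlex h₁] at h01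

theorem polarSum_posIndicator_eq (h : IsPivotSystem μ 𝓕 w) (n : ι → ℝ) {ξ₀ ξ₁ : Module.Dual ℝ V}
    (h₀ : IsGenericForm 𝓕 w ξ₀) (h₁ : IsGenericForm 𝓕 w ξ₁) :
    polarSum 𝓕 w n (posIndicator ξ₀) = polarSum 𝓕 w n (posIndicator ξ₁) := by
  let edge (p : 𝓕.sigma id) : V := w p.1.1 p.1.2
  let cross (ξ : Module.Dual ℝ V) (p : 𝓕.sigma Finset.offDiag) : V :=
    ξ (w p.1.1 p.1.2.1) • w p.1.1 p.1.2.2 - ξ (w p.1.1 p.1.2.2) • w p.1.1 p.1.2.1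
  have hedge (p : 𝓕.sigma id) : edge p ≠ 0 := by
    obtain ⟨hB, hi⟩ := Finset.mem_sigma.mp p.2
    exact h.ne_zero hB hi
  have hcross {ξ : Module.Dual ℝ V} (hξ : IsGenericForm 𝓕 w ξ) (p : 𝓕.sigma Finset.offDiag) :
      cross ξ p ≠ 0 := by
    obtain ⟨hB, hij⟩ := Finset.mem_sigma.mp p.2
    obtain ⟨hi, hj, hij⟩ := Finset.mem_offDiag.mp hij
    exact h.smul_sub_smul_ne_zero hB hi hj hij (hξ _ hB _ hi) _
  obtain ⟨ξ, hξ⟩ := Module.exists_dual_forall_apply_ne_zero (K := ℝ)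
    (Sum.elim edge (Sum.elim (cross ξ₀) (cross ξ₁)))
    (Sum.forall.mpr ⟨hedge, Sum.forall.mpr ⟨hcross h₀, hcross h₁⟩⟩)
  simp only [Sum.forall, Sum.elim_inl, Sum.elim_inr] at hξ
  obtain ⟨hξedge, hξcross₀, hξcross₁⟩ := hξ
  have hgeneric : IsGenericForm 𝓕 w ξ := fun B hB i hi =>
    hξedge ⟨⟨B, i⟩, Finset.mem_sigma.mpr ⟨hB, hi⟩⟩
  have hto {ξ' : Module.Dual ℝ V} (h' : IsGenericForm 𝓕 w ξ') (hξ' : ∀ p, ξ (cross ξ' p) ≠ 0) :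
      polarSum 𝓕 w n (posIndicator ξ') = polarSum 𝓕 w n (posIndicator ξ) := by
    refine h.polarSum_eq_of_cross_ne n h' hgeneric fun B hB i hi j hj hij => ?_
    simpa [cross, sub_eq_zero] using hξ' ⟨⟨B, i, j⟩,
      Finset.mem_sigma.mpr ⟨hB, Finset.mem_offDiag.mpr ⟨hi, hj, hij⟩⟩⟩
  rw [hto h₀ hξcross₀, hto h₁ hξcross₁]

end IsPivotSystem

end PivotSystems

/-! ### Simple polytopes -/

section SimplePolytopes

open Filter Topology

variable {ι V : Type*} [AddCommGroup V] [Module ℝ V]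

/-- The polyhedron `P(b)`, the set of solutions of the inequalities `μ j x ≤ b j`. -/
def polyhedron (μ : ι → Module.Dual ℝ V) (b : ι → ℝ) : Set V :=
  {x | ∀ j, μ j x ≤ b j}

theorem exists_apply_sub_smul_eq_and_mem_polyhedron [Finite ι] {μ : ι → Module.Dual ℝ V}
    {b : ι → ℝ} {y : V} (hy : y ∈ polyhedron μ b) {v : V} (hv : ∃ k, μ k v < 0) :
    ∃ k, ∃ r : ℝ, μ k v < 0 ∧ μ k (y - r • v) = b k ∧ y - r • v ∈ polyhedron μ b := by
  have := Fintype.ofFinite ι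
  let K : Finset ι := {k | μ k v < 0}
  obtain ⟨k, hkK, hmin⟩ := K.exists_min_image (fun k => (b k - μ k y) / -μ k v)
    (hv.imp fun k hk => by simpa [K] using hk)
  have hk : μ k v < 0 := by simpa [K] using hkK
  set r := (b k - μ k y) / -μ k v with hr
  have hr₀ : 0 ≤ r := div_nonneg (sub_nonneg.mpr (hy k)) (neg_nonneg.mpr hk.le)
  refine ⟨k, r, hk, ?_, fun l => ?_⟩
  · rw [map_sub, map_smul, smul_eq_mul, hr]
    field [hk.ne]
  · rw [map_sub, map_smul, smul_eq_mul]
    obtain hl | hl := lt_or_ge (μ l v) 0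
    · have hrl := hmin l (by simpa [K] using hl)
      rw [le_div_iff₀ (neg_pos.mpr hl)] at hrl
      linarith
    · linarith [hy l, mul_nonneg hr₀ hl]

theorem exists_dual_forall_ne_zero_and_neg {α β : Type*} [Finite α] [Finite β] {v : α → V}
    (hv : ∀ a, v a ≠ 0) {u : β → V} (ζ : Module.Dual ℝ V) (hζ : ∀ c, ζ (u c) < 0) :
    ∃ ξ : Module.Dual ℝ V, (∀ a, ξ (v a) ≠ 0) ∧ ∀ c, ξ (u c) < 0 := by
  obtain ⟨ρ, hρ⟩ := Module.exists_dual_forall_apply_ne_zero (K := ℝ) v hv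
  have hlim (x : V) : Tendsto (fun ε : ℝ => (ζ + ε • ρ) x) (𝓝[>] 0) (𝓝 (ζ x)) := by
    have hcont : Continuous fun ε : ℝ => ζ x + ε * ρ x := by fun_prop
    simpa using (hcont.tendsto 0).mono_left nhdsWithin_le_nhds
  have hne (a : α) : ∀ᶠ ε : ℝ in 𝓝[>] 0, (ζ + ε • ρ) (v a) ≠ 0 := by
    by_cases h₀ : ζ (v a) = 0
    · filter_upwards [self_mem_nhdsWithin] with ε (hε : 0 < ε)
      simpa [h₀] using ⟨hε.ne', hρ a⟩
    · exact (hlim _).eventually_ne h₀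
  have hneg (c : β) : ∀ᶠ ε : ℝ in 𝓝[>] 0, (ζ + ε • ρ) (u c) < 0 :=
    (hlim _).eventually_lt_const (hζ c)
  obtain ⟨ε, hε, hε'⟩ := ((eventually_all.mpr hne).and (eventually_all.mpr hneg)).exists
  exact ⟨_, hε, hε'⟩

theorem IsPivotSystem.exists_isGenericForm [DecidableEq ι] {μ : ι → Module.Dual ℝ V}
    {𝓕 : Finset (Finset ι)} {w : Finset ι → ι → V} (h : IsPivotSystem μ 𝓕 w) {β : Type*}
    [Finite β] {u : β → V} (ζ : Module.Dual ℝ V) (hζ : ∀ c, ζ (u c) < 0) :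
    ∃ ξ, IsGenericForm 𝓕 w ξ ∧ ∀ c, ξ (u c) < 0 := by
  have hne (p : 𝓕.sigma id) : w p.1.1 p.1.2 ≠ 0 := by
    obtain ⟨hB, hi⟩ := Finset.mem_sigma.mp p.2
    exact h.ne_zero hB hi
  obtain ⟨ξ, hξ, hξu⟩ := exists_dual_forall_ne_zero_and_neg hne ζ hζ
  exact ⟨ξ, fun B hB i hi => hξ ⟨⟨B, i⟩, Finset.mem_sigma.mpr ⟨hB, hi⟩⟩, hξu⟩

/-- The vertex `s_B(b)` at which the inequalities `μ j x ≤ b j` with `j ∈ B` are equalities, where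
`w B` is the basis dual to `(μ j)_{j ∈ B}`. -/
noncomputable def vertexAt (w : Finset ι → ι → V) (b : ι → ℝ) (B : Finset ι) : V :=
  ∑ j ∈ B, b j • w B j

/-- The parameters `b` for which the vertices `s_B(b)`, `B ∈ 𝓕`, all lie in `P(b)`: the closed type
cone of a simple polytope whose vertices are indexed by `𝓕`. -/
def typeCone (μ : ι → Module.Dual ℝ V) (𝓕 : Finset (Finset ι)) (w : Finset ι → ι → V) :
    Set (ι → ℝ) :=
  {b | ∀ B ∈ 𝓕, ∀ k ∉ B, μ k (vertexAt w b B) ≤ b k}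

theorem smul_mem_typeCone {μ : ι → Module.Dual ℝ V} {𝓕 : Finset (Finset ι)}
    {w : Finset ι → ι → V} {b : ι → ℝ} (hb : b ∈ typeCone μ 𝓕 w) {r : ℝ} (hr : 0 ≤ r) :
    r • b ∈ typeCone μ 𝓕 w := by
  intro B hB k hk
  have hvertex : vertexAt w (r • b) B = r • vertexAt w b B := by
    simp only [vertexAt, Finset.smul_sum, Pi.smul_apply, smul_eq_mul, mul_smul]
  rw [hvertex, map_smul]
  exact mul_le_mul_of_nonneg_left (hb B hB k hk) hr

/-- The index sets `𝓕` of the vertices of a simple polytope `P(b₀)`, with edge directions `w B j`.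
The field `complete` says that no vertex adjacent to one in `𝓕` is missing. -/
structure IsSimpleVertexSystem [DecidableEq ι] (μ : ι → Module.Dual ℝ V) (b₀ : ι → ℝ)
    (𝓕 : Finset (Finset ι)) (w : Finset ι → ι → V) : Prop where
  nonempty : 𝓕.Nonempty
  exists_neg : ∀ v : V, v ≠ 0 → ∃ k, μ k v < 0
  dual : ∀ B ∈ 𝓕, ∀ i ∈ B, ∀ j ∈ B, μ i (w B j) = if i = j then 1 else 0
  separating : ∀ B ∈ 𝓕, ∀ x, (∀ j ∈ B, μ j x = 0) → x = 0
  lt : ∀ B ∈ 𝓕, ∀ k ∉ B, μ k (vertexAt w b₀ B) < b₀ k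
  complete : ∀ B ∈ 𝓕, ∀ i ∈ B, ∀ k ∉ B,
    (∀ x, (∀ j ∈ insert k (B.erase i), μ j x = 0) → x = 0) →
    ∀ y ∈ polyhedron μ b₀, (∀ j ∈ insert k (B.erase i), μ j y = b₀ j) → insert k (B.erase i) ∈ 𝓕

namespace IsSimpleVertexSystem

variable [DecidableEq ι] {μ : ι → Module.Dual ℝ V} {b₀ b : ι → ℝ} {𝓕 : Finset (Finset ι)}
  {w : Finset ι → ι → V} {B B' : Finset ι} {i k : ι}

theorem apply_vertexAt (h : IsSimpleVertexSystem μ b₀ 𝓕 w) (hB : B ∈ 𝓕) (b : ι → ℝ)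
    (hi : i ∈ B) : μ i (vertexAt w b B) = b i := by
  simp only [vertexAt, map_sum, map_smul, smul_eq_mul]
  rw [Finset.sum_congr rfl fun j hj => by rw [h.dual B hB i hi j hj]]
  simp [hi]

theorem vertexAt_apply (h : IsSimpleVertexSystem μ b₀ 𝓕 w) (hB : B ∈ 𝓕) (x : V) :
    vertexAt w (fun j => μ j x) B = x :=
  sub_eq_zero.mp <| h.separating B hB _ fun j hj => by
    rw [map_sub, h.apply_vertexAt hB _ hj, sub_self]

theorem vertexAt_sub (h : IsSimpleVertexSystem μ b₀ 𝓕 w) (hB : B ∈ 𝓕) (b : ι → ℝ) (x : V) :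
    vertexAt w b B - x = ∑ j ∈ B, (b j - μ j x) • w B j := by
  conv_lhs => rw [← h.vertexAt_apply hB x]
  simp only [vertexAt, sub_smul, Finset.sum_sub_distrib]

theorem eq_smul (h : IsSimpleVertexSystem μ b₀ 𝓕 w) (hB : B ∈ 𝓕) (hi : i ∈ B) {x : V}
    (hx : ∀ j ∈ B.erase i, μ j x = 0) : x = μ i x • w B i := by
  conv_lhs => rw [← h.vertexAt_apply hB x]
  refine Finset.sum_eq_single_of_mem i hi fun j hj hji => ?_
  beta_reduce
  rw [hx j (Finset.mem_erase.mpr ⟨hji, hj⟩), zero_smul]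

theorem card_eq_finrank (h : IsSimpleVertexSystem μ b₀ 𝓕 w) (hB : B ∈ 𝓕) :
    B.card = Module.finrank ℝ V := by
  let f : V →ₗ[ℝ] B → ℝ := LinearMap.pi fun j => μ j
  have hinj : Function.Injective f := (injective_iff_map_eq_zero f).mpr fun x hx =>
    h.separating B hB x fun j hj => congrFun hx ⟨j, hj⟩
  have hsurj : Function.Surjective f := fun c => by
    refine ⟨vertexAt w (fun j => if hj : j ∈ B then c ⟨j, hj⟩ else 0) B, funext fun j => ?_⟩
    simp only [f, LinearMap.pi_apply, h.apply_vertexAt hB _ j.2, j.2, dif_pos]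
  rw [(LinearEquiv.ofBijective f ⟨hinj, hsurj⟩).finrank_eq]
  simp

theorem vertexAt_mem_polyhedron (h : IsSimpleVertexSystem μ b₀ 𝓕 w) (hb : b ∈ typeCone μ 𝓕 w)
    (hB : B ∈ 𝓕) : vertexAt w b B ∈ polyhedron μ b := by
  intro k
  by_cases hk : k ∈ B
  · exact (h.apply_vertexAt hB b hk).le
  · exact hb B hB k hk

theorem mem_typeCone (h : IsSimpleVertexSystem μ b₀ 𝓕 w) : b₀ ∈ typeCone μ 𝓕 w :=
  fun B hB k hk => (h.lt B hB k hk).le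

theorem exists_areOppositeEdges [Finite ι] (h : IsSimpleVertexSystem μ b₀ 𝓕 w) (hB : B ∈ 𝓕)
    (hi : i ∈ B) : ∃ B' k, AreOppositeEdges 𝓕 B i B' k := by
  have hwi (j : ι) (hj : j ∈ B.erase i) : μ j (w B i) = 0 := by
    rw [h.dual B hB j (Finset.mem_of_mem_erase hj) i hi, if_neg (Finset.ne_of_mem_erase hj)]
  have hw₀ : w B i ≠ 0 := fun h₀ => by simpa [h₀] using h.dual B hB i hi i hi
  obtain ⟨k, r, hk, hyk, hy⟩ := exists_apply_sub_smul_eq_and_mem_polyhedron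
    (h.vertexAt_mem_polyhedron h.mem_typeCone hB) (h.exists_neg _ hw₀)
  have hkB : k ∉ B := by
    intro hkB
    rw [h.dual B hB k hkB i hi] at hk
    split_ifs at hk <;> linarith
  have hki : k ∉ B.erase i := fun hk' => hkB (Finset.mem_of_mem_erase hk')
  refine ⟨insert k (B.erase i), k, hB, hi, ?_, Finset.mem_insert_self _ _, fun he =>
    hkB (he ▸ Finset.mem_insert_self _ _), Finset.erase_insert hki⟩
  refine h.complete B hB i hi k hkB (fun x hx => ?_) _ hy
    (Finset.forall_mem_insert _ _ _ |>.mpr ⟨hyk, fun j hj => ?_⟩)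
  · obtain ⟨hxk, hxi⟩ := (Finset.forall_mem_insert _ _ _).mp hx
    have hx' := h.eq_smul hB hi hxi
    rw [hx', map_smul, smul_eq_mul, mul_eq_zero, or_iff_left hk.ne] at hxk
    rw [hx', hxk, zero_smul]
  · rw [map_sub, map_smul, hwi j hj, smul_zero, sub_zero,
      h.apply_vertexAt hB b₀ (Finset.mem_of_mem_erase hj)]

theorem exists_eq_neg_smul (h : IsSimpleVertexSystem μ b₀ 𝓕 w)
    (hopp : AreOppositeEdges 𝓕 B i B' k) : ∃ r : ℝ, 0 < r ∧ w B' k = -r • w B i := by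
  have hB := hopp.left_mem
  have hi := hopp.mem_left
  have hB' := hopp.right_mem
  have hk := hopp.mem_right
  have hw : w B' k = μ i (w B' k) • w B i := by
    refine h.eq_smul hB hi fun j hj => ?_
    rw [← hopp.erase_eq] at hj
    rw [h.dual B' hB' j (Finset.mem_of_mem_erase hj) k hk, if_neg (Finset.ne_of_mem_erase hj)]
  set e := vertexAt w b₀ B' - vertexAt w b₀ B
  have he_smul : e = μ i e • w B i := by
    refine h.eq_smul hB hi fun j hj => ?_
    rw [map_sub, h.apply_vertexAt hB b₀ (Finset.mem_of_mem_erase hj),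
      h.apply_vertexAt hB' b₀ (hopp.mem_right_of_mem_erase hj), sub_self]
  have hie : μ i e < 0 := by
    rw [map_sub, h.apply_vertexAt hB b₀ hi, sub_neg]
    exact h.lt B' hB' i hopp.notMem_right
  have hke : 0 < μ k e := by
    rw [map_sub, h.apply_vertexAt hB' b₀ hk, sub_pos]
    exact h.lt B hB k hopp.notMem_left
  have hkw : μ k (w B i) < 0 := by
    rw [he_smul, map_smul, smul_eq_mul] at hke
    exact (neg_iff_neg_of_mul_pos hke).mp hie
  have hone : 0 < μ i (w B' k) * μ k (w B i) := by
    have := congrArg (μ k) hw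
    rw [map_smul, smul_eq_mul, h.dual B' hB' k hk k hk, if_pos rfl] at this
    exact this ▸ one_pos
  exact ⟨-μ i (w B' k), neg_pos.mpr ((neg_iff_neg_of_mul_pos hone).mpr hkw), by rwa [neg_neg]⟩

theorem isPivotSystem [Finite ι] (h : IsSimpleVertexSystem μ b₀ 𝓕 w) : IsPivotSystem μ 𝓕 w where
  dual := h.dual
  exists_areOppositeEdges _ hB _ hi := h.exists_areOppositeEdges hB hi
  opposite _ _ _ _ hopp := h.exists_eq_neg_smul hopp
  congr B i B' k hopp j hj := by
    refine ⟨μ i (w B' j - w B j), ?_⟩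
    rw [← h.eq_smul hopp.left_mem hopp.mem_left fun l hl => ?_, add_sub_cancel]
    rw [map_sub, h.dual B hopp.left_mem l (Finset.mem_of_mem_erase hl) j
        (Finset.mem_of_mem_erase hj), h.dual B' hopp.right_mem l (hopp.mem_right_of_mem_erase hl) j
        (hopp.mem_right_of_mem_erase hj), sub_self]

theorem exists_mem_notMem (h : IsSimpleVertexSystem μ b₀ 𝓕 w) (hB : B ∈ 𝓕) (hB' : B' ∈ 𝓕)
    (hne : B ≠ B') : ∃ i ∈ B, i ∉ B' := by
  by_contra! hsub
  obtain ⟨k, hk, hkB⟩ := Finset.exists_of_ssubset (Finset.ssubset_iff_subset_ne.mpr ⟨hsub, hne⟩)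
  have hw₀ : w B' k = 0 := h.separating B hB _ fun j hj => by
    rw [h.dual B' hB' j (hsub j hj) k hk, if_neg (ne_of_mem_of_not_mem hj hkB)]
  simpa [hw₀] using h.dual B' hB' k hk k hk

/-- If `ξ` is smaller at the vertex than at `x`, then `x` lies outside the flipped cone at that
vertex. -/
theorem prod_posIndicator_sub_eq_zero (h : IsSimpleVertexSystem μ b₀ 𝓕 w) (hB : B ∈ 𝓕)
    {ξ : Module.Dual ℝ V} {x : V} (hlt : ξ (vertexAt w b B - x) < 0)
    [∀ j, Decidable (μ j x ≤ b j)] :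
    ∏ j ∈ B, (posIndicator ξ (w B j) - if μ j x ≤ b j then 0 else 1) = 0 := by
  rw [h.vertexAt_sub hB, map_sum] at hlt
  obtain ⟨l, hl, hlt⟩ := Finset.exists_lt_of_sum_lt (s := B) (g := fun _ => (0 : ℝ))
    (hlt.trans_eq Finset.sum_const_zero.symm)
  rw [map_smul, smul_eq_mul] at hlt
  refine Finset.prod_eq_zero hl ?_
  obtain ⟨hpos, hneg⟩ | ⟨hneg, hpos⟩ := mul_neg_iff.mp hlt
  · simp [posIndicator, (sub_pos.mp hpos).le, hneg.not_gt]
  · simp [posIndicator, (sub_neg.mp hneg).not_ge, hpos]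

theorem exists_polarSum_eq_one [Finite ι] (h : IsSimpleVertexSystem μ b₀ 𝓕 w) :
    ∃ ξ, IsGenericForm 𝓕 w ξ ∧ polarSum 𝓕 w 0 (posIndicator ξ) = 1 := by
  obtain ⟨B₀, hB₀⟩ := h.nonempty
  set y : V := vertexAt w b₀ B₀
  let u : B₀ ⊕ 𝓕.erase B₀ → V := Sum.elim (fun j => -w B₀ j) fun B => vertexAt w b₀ B - y
  have hζ : ∀ c, (∑ j ∈ B₀, μ j) (u c) < 0 := by
    rintro (⟨j, hj⟩ | ⟨B, hB⟩) <;> simp only [u, Sum.elim_inl, Sum.elim_inr, LinearMap.sum_apply]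
    · rw [Finset.sum_congr rfl fun i hi => by rw [map_neg, h.dual B₀ hB₀ i hi j hj]]
      simp [hj]
    · obtain ⟨hne, hB⟩ := Finset.mem_erase.mp hB
      obtain ⟨i, hi, hiB⟩ := h.exists_mem_notMem hB₀ hB hne.symm
      refine Finset.sum_neg' (fun j hj => ?_) ⟨i, hi, ?_⟩
      · rw [map_sub, h.apply_vertexAt hB₀ b₀ hj, sub_nonpos]
        exact h.vertexAt_mem_polyhedron h.mem_typeCone hB j
      · rw [map_sub, h.apply_vertexAt hB₀ b₀ hi, sub_neg]
        exact h.lt B hB i hiB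
  obtain ⟨ξ, hξ, hneg⟩ := h.isPivotSystem.exists_isGenericForm _ hζ
  obtain ⟨hpos, hlt⟩ := Sum.forall.mp hneg
  refine ⟨ξ, hξ, ?_⟩
  rw [polarSum, Finset.sum_eq_single_of_mem B₀ hB₀ fun B hB hne => ?_]
  · refine Finset.prod_eq_one fun j hj => ?_
    have hj₀ : 0 < ξ (w B₀ j) := by simpa [u] using hpos ⟨j, hj⟩
    simp [posIndicator, hj₀]
  · classical
    have := h.prod_posIndicator_sub_eq_zero hB (hlt ⟨B, Finset.mem_erase.mpr ⟨hne, hB⟩⟩)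
    simpa [h.vertexAt_mem_polyhedron h.mem_typeCone hB₀ _, y] using this

/-- For `x ∈ P(b)` the sum is that of the signs of the flipped cones, hence does not depend on `x`
or `b`; for `x ∉ P(b)` the form `ξ` may be replaced by one that separates `x` from the vertices. -/
theorem polarSum_eq_indicator [Finite ι] (h : IsSimpleVertexSystem μ b₀ 𝓕 w)
    {ξ : Module.Dual ℝ V} (hξ : IsGenericForm 𝓕 w ξ) (hb : b ∈ typeCone μ 𝓕 w) (x : V)
    [∀ j, Decidable (μ j x ≤ b j)] [Decidable (x ∈ polyhedron μ b)] :
    polarSum 𝓕 w (fun j => if μ j x ≤ b j then 0 else 1) (posIndicator ξ) =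
      if x ∈ polyhedron μ b then 1 else 0 := by
  split_ifs with hx
  · obtain ⟨ξ₁, hξ₁, hone⟩ := h.exists_polarSum_eq_one
    rw [← hone, ← h.isPivotSystem.polarSum_posIndicator_eq 0 hξ hξ₁]
    congr 1
    ext j
    exact if_pos (hx j)
  · obtain ⟨j, hj⟩ : ∃ j, b j < μ j x := by simpa [polyhedron] using hx
    have hζ (B : 𝓕) : μ j (vertexAt w b B - x) < 0 := by
      rw [map_sub, sub_neg]
      exact (h.vertexAt_mem_polyhedron hb B.2 j).trans_lt hj
    obtain ⟨ξ₁, hξ₁, hneg⟩ := h.isPivotSystem.exists_isGenericForm (μ j) hζ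
    rw [h.isPivotSystem.polarSum_posIndicator_eq _ hξ hξ₁]
    exact Finset.sum_eq_zero fun B hB => h.prod_posIndicator_sub_eq_zero hB (hneg ⟨B, hB⟩)

end IsSimpleVertexSystem

end SimplePolytopes

/-! ### Powers of generic linear forms -/

section PowersOfLinearForms

open MvPolynomial

open scoped Matrix

variable {σ K : Type*}

theorem sum_eq_of_isHomogeneous {R : Type*} [CommSemiring R] {m : ℕ} {p : MvPolynomial σ R}
    (hp : p.IsHomogeneous m) {s : σ →₀ ℕ} (hs : s ∈ p.support) : ∑ i ∈ s.support, s i = m := by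
  simpa [Finsupp.weight_apply, Finsupp.sum] using hp (mem_support_iff.mp hs)

variable [Fintype σ]

theorem dual_apply_eq_sum_of_isHomogeneous [DecidableEq σ] [CommSemiring K]
    (φ : Module.Dual K (MvPolynomial σ K)) {m : ℕ} {p : MvPolynomial σ K}
    (hp : p.IsHomogeneous m) :
    φ p = ∑ s ∈ Finset.univ.finsuppAntidiag m, coeff s p * φ (monomial s 1) := by
  have hsub : p.support ⊆ Finset.univ.finsuppAntidiag m := fun s hs =>
    Finset.mem_finsuppAntidiag'.mpr ⟨sum_eq_of_isHomogeneous hp hs, Finset.subset_univ _⟩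
  conv_lhs => rw [p.as_sum, map_sum]
  rw [Finset.sum_subset hsub fun s _ hs => by rw [notMem_support_iff.mp hs, map_zero, map_zero]]
  refine Finset.sum_congr rfl fun s _ => ?_
  rw [← smul_eq_mul, ← map_smul, smul_monomial, smul_eq_mul, mul_one]

variable [Field K]

theorem isHomogeneous_sum_smul_X_pow (l : σ → K) (m : ℕ) :
    ((∑ j, l j • X j : MvPolynomial σ K) ^ m).IsHomogeneous m := by
  have hl : (∑ j, l j • X j : MvPolynomial σ K).IsHomogeneous 1 :=
    IsHomogeneous.sum _ _ _ fun j _ => by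
      rw [smul_eq_C_mul]
      exact (isHomogeneous_X K j).C_mul (l j)
  simpa using hl.pow m

/-- The polynomial `l ↦ φ((∑ j, l j • X j) ^ m)` of the coefficients of a linear form, which is
apolar dual to the functional `φ` on polynomials of degree `m`. -/
noncomputable def powerPairing [DecidableEq σ] (φ : Module.Dual K (MvPolynomial σ K))
    (m : ℕ) : MvPolynomial σ K :=
  ∑ s ∈ Finset.univ.finsuppAntidiag m, monomial s (s.multinomial * φ (monomial s 1))

theorem eval_powerPairing [DecidableEq σ] (φ : Module.Dual K (MvPolynomial σ K)) (m : ℕ)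
    (l : σ → K) :
    eval l (powerPairing φ m) = φ ((∑ j, l j • X j) ^ m) := by
  rw [dual_apply_eq_sum_of_isHomogeneous φ (isHomogeneous_sum_smul_X_pow l m), powerPairing,
    map_sum]
  refine Finset.sum_congr rfl fun s hs => ?_
  have hdeg : (s.sum fun _ k => k) = m := by
    rw [Finsupp.sum_fintype _ _ fun _ => rfl]
    exact (Finset.mem_finsuppAntidiag.mp hs).1
  rw [coeff_linearCombination_X_pow_of_fintype, if_pos hdeg, eval_monomial]
  ring

theorem dual_apply_eq_zero_of_powerPairing_eq_zero [DecidableEq σ] [CharZero K]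
    {φ : Module.Dual K (MvPolynomial σ K)} {m : ℕ} (hφ : powerPairing φ m = 0)
    {p : MvPolynomial σ K} (hp : p.IsHomogeneous m) : φ p = 0 := by
  rw [dual_apply_eq_sum_of_isHomogeneous φ hp]
  refine Finset.sum_eq_zero fun s hs => ?_
  have hcoeff : (s.multinomial : K) * φ (monomial s 1) = 0 := by
    simpa [powerPairing, coeff_sum, coeff_monomial, hs] using congrArg (coeff s) hφ
  rw [(mul_eq_zero.mp hcoeff).resolve_left, mul_zero]
  exact Nat.cast_ne_zero.mpr (Nat.multinomial_pos _ _).ne'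

theorem sum_smul_X_ne_zero {v : σ → K} (hv : v ≠ 0) :
    (∑ j, v j • X j : MvPolynomial σ K) ≠ 0 := by
  classical
  contrapose! hv
  ext i
  simpa [Pi.single_apply] using congrArg (eval (Pi.single i 1)) hv

/-- A functional annihilating these powers has a power pairing that vanishes off finitely many
hyperplanes, hence everywhere. -/
theorem mem_span_pow_of_isHomogeneous [CharZero K] {m : ℕ} {p : MvPolynomial σ K}
    (hp : p.IsHomogeneous m) {V : Finset (σ → K)} (hV : 0 ∉ V) :
    p ∈ Submodule.span K {q : MvPolynomial σ K | ∃ l : σ → K,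
      (∀ v ∈ V, l ⬝ᵥ v ≠ 0) ∧ q = (∑ j, l j • X j) ^ m} := by
  classical
  by_contra hmem
  obtain ⟨φ, hφ, hker⟩ := Submodule.exists_le_ker_of_notMem hmem
  have hforms : ∏ v ∈ V, (∑ j, v j • X j : MvPolynomial σ K) ≠ 0 :=
    Finset.prod_ne_zero_iff.mpr fun v hv => sum_smul_X_ne_zero (ne_of_mem_of_not_mem hv hV)
  have hmul : powerPairing φ m * ∏ v ∈ V, (∑ j, v j • X j) = 0 := by
    refine MvPolynomial.funext fun l => ?_
    rw [map_mul, map_prod, map_zero, mul_eq_zero]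
    by_cases hl : ∀ v ∈ V, l ⬝ᵥ v ≠ 0
    · left
      rw [eval_powerPairing]
      exact hker (Submodule.subset_span ⟨l, hl, rfl⟩)
    · right
      push Not at hl
      obtain ⟨v, hv, hlv⟩ := hl
      exact Finset.prod_eq_zero hv (by simpa [dotProduct, mul_comm] using hlv)
  exact hφ (dual_apply_eq_zero_of_powerPairing_eq_zero
    ((mul_eq_zero.mp hmul).resolve_right hforms) hp)

end PowersOfLinearForms

/-! ### Chambers -/

section FormBases

open Module

variable {ι V : Type*} [AddCommGroup V] [Module ℝ V] {μ : ι → Dual ℝ V} {B : Finset ι}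

/-- The forms `μ j`, `j ∈ B`, are a basis of the dual space. -/
def IsFormBasis (μ : ι → Dual ℝ V) (B : Finset ι) : Prop :=
  LinearIndependent ℝ (fun j : {j // j ∈ B} => μ j.1) ∧
    Submodule.span ℝ (Set.range fun j : {j // j ∈ B} => μ j.1) = ⊤

theorem eq_zero_of_span_eq_top {S : Set (Dual ℝ V)} (hS : Submodule.span ℝ S = ⊤) {x : V}
    (hx : ∀ φ ∈ S, φ x = 0) : x = 0 := by
  refine (forall_dual_apply_eq_zero_iff ℝ x).mp fun φ => ?_
  have hle : Submodule.span ℝ S ≤ LinearMap.ker (Dual.eval ℝ V x) := Submodule.span_le.mpr hx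
  exact hle (hS ▸ Submodule.mem_top)

theorem span_eq_top_of_forall_eq_zero [FiniteDimensional ℝ V] {S : Set (Dual ℝ V)}
    (hS : ∀ x, (∀ φ ∈ S, φ x = 0) → x = 0) : Submodule.span ℝ S = ⊤ := by
  have hbot : (Submodule.span ℝ S).dualCoannihilator = ⊥ :=
    (Submodule.eq_bot_iff _).mpr fun x hx => hS x fun φ hφ =>
      (Submodule.mem_dualCoannihilator x).mp hx φ (Submodule.subset_span hφ)
  rw [← Subspace.dualCoannihilator_dualAnnihilator_eq (W := Submodule.span ℝ S), hbot,
    Submodule.dualAnnihilator_bot]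

theorem IsFormBasis.eq_zero (hB : IsFormBasis μ B) {x : V} (hx : ∀ j ∈ B, μ j x = 0) : x = 0 :=
  eq_zero_of_span_eq_top hB.2 (by simpa using hx)

theorem isFormBasis_iff [FiniteDimensional ℝ V] :
    IsFormBasis μ B ↔ B.card = finrank ℝ V ∧ ∀ x, (∀ j ∈ B, μ j x = 0) → x = 0 := by
  constructor
  · intro hB
    refine ⟨?_, fun x => hB.eq_zero⟩
    rw [← Subspace.dual_finrank_eq, finrank_eq_card_basis (Basis.mk hB.1 hB.2.ge),
      Fintype.card_coe]
  · rintro ⟨hcard, hsep⟩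
    have hspan : Submodule.span ℝ (Set.range fun j : {j // j ∈ B} => μ j.1) = ⊤ :=
      span_eq_top_of_forall_eq_zero (by simpa using hsep)
    refine ⟨linearIndependent_of_top_le_span_of_card_eq_finrank hspan.ge ?_, hspan⟩
    rw [Fintype.card_coe, hcard, Subspace.dual_finrank_eq]

theorem exists_finset_isFormBasis [Finite ι] {S : Set ι}
    (hS : Submodule.span ℝ (μ '' S) = ⊤) : ∃ B : Finset ι, ↑B ⊆ S ∧ IsFormBasis μ B := by
  obtain ⟨T, hTS, -, hspan, hli⟩ :=
    exists_linearIndepOn_extension (linearIndepOn_empty ℝ μ) (Set.empty_subset S)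
  lift T to Finset ι using T.toFinite
  refine ⟨T, hTS, hli, ?_⟩
  rw [eq_top_iff, ← hS, Submodule.span_le]
  rwa [Set.image_eq_range μ T] at hspan

theorem exists_apply_neg_of_forall_eq_sum [Fintype ι]
    (hgen : ∀ ξ : Dual ℝ V, ∃ c : ι → ℝ, (∀ j, 0 ≤ c j) ∧ ξ = ∑ j, c j • μ j) {v : V}
    (hv : v ≠ 0) : ∃ k, μ k v < 0 := by
  contrapose! hv with hpos
  have hnonneg (ξ : Dual ℝ V) : 0 ≤ ξ v := by
    obtain ⟨c, hc, rfl⟩ := hgen ξ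
    simpa using Finset.sum_nonneg fun j _ => mul_nonneg (hc j) (hpos j)
  exact (forall_dual_apply_eq_zero_iff ℝ v).mp fun φ =>
    le_antisymm (by simpa using hnonneg (-φ)) (hnonneg φ)

end FormBases

section Polyhedra

open Filter Topology Module

variable {ι V : Type*} [AddCommGroup V] [Module ℝ V] {μ : ι → Dual ℝ V} {b : ι → ℝ}

theorem polyhedron_eq_iInter (μ : ι → Dual ℝ V) (b : ι → ℝ) :
    polyhedron μ b = ⋂ j, {x | μ j x ≤ b j} := by
  ext x
  simp [polyhedron]

theorem inv_smul_mem_polyhedron_iff {r : ℝ} (hr : 0 < r) {x : V} :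
    r⁻¹ • x ∈ polyhedron μ b ↔ x ∈ polyhedron μ (r • b) :=
  forall_congr' fun j => by
    rw [map_smul, smul_eq_mul, Pi.smul_apply, smul_eq_mul, inv_mul_le_iff₀ hr]

theorem convex_polyhedron (μ : ι → Dual ℝ V) (b : ι → ℝ) : Convex ℝ (polyhedron μ b) := by
  rw [polyhedron_eq_iInter]
  exact convex_iInter fun j => convex_halfSpace_le (μ j).isLinear _

theorem eq_zero_of_mem_extremePoints_polyhedron [Finite ι] {x v : V}
    (hx : x ∈ (polyhedron μ b).extremePoints ℝ) (hv : ∀ j, μ j x = b j → μ j v = 0) : v = 0 := by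
  have hsmall : ∀ᶠ ε : ℝ in 𝓝[>] 0, ∀ j, ε * |μ j v| ≤ b j - μ j x := by
    refine eventually_all.mpr fun j => ?_
    obtain hj | hj := (hx.1 j).eq_or_lt
    · simp [hv j hj, hj]
    · have hcont : Continuous fun ε : ℝ => ε * |μ j v| := by fun_prop
      have hlim := (hcont.tendsto' 0 0 (zero_mul _)).mono_left (nhdsWithin_le_nhds (s := Set.Ioi 0))
      exact (hlim.eventually_lt_const (sub_pos.mpr hj)).mono fun _ => le_of_lt
  obtain ⟨ε, hε, hpos : 0 < ε⟩ := (hsmall.and self_mem_nhdsWithin).exists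
  have hplus : x + ε • v ∈ polyhedron μ b := fun j => by
    rw [map_add, map_smul, smul_eq_mul]
    linarith [hε j, mul_le_mul_of_nonneg_left (le_abs_self (μ j v)) hpos.le]
  have hminus : x - ε • v ∈ polyhedron μ b := fun j => by
    rw [map_sub, map_smul, smul_eq_mul]
    linarith [hε j, mul_le_mul_of_nonneg_left (neg_abs_le (μ j v)) hpos.le]
  have hseg : x ∈ openSegment ℝ (x + ε • v) (x - ε • v) :=
    ⟨1 / 2, 1 / 2, by norm_num, by norm_num, by norm_num, by module⟩
  have hεv : x + ε • v = x := hx.2 hplus hminus hseg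
  exact (smul_eq_zero.mp (add_eq_left.mp hεv)).resolve_left hpos.ne'

variable {E : Type*} [NormedAddCommGroup E] [NormedSpace ℝ E] [FiniteDimensional ℝ E]
  {μ : ι → Dual ℝ E}

theorem isClosed_polyhedron (μ : ι → Dual ℝ E) (b : ι → ℝ) : IsClosed (polyhedron μ b) := by
  rw [polyhedron_eq_iInter]
  exact isClosed_iInter fun j =>
    isClosed_le (μ j).continuous_of_finiteDimensional continuous_const

theorem isBounded_polyhedron [Fintype ι]
    (hgen : ∀ ξ : Dual ℝ E, ∃ c : ι → ℝ, (∀ j, 0 ≤ c j) ∧ ξ = ∑ j, c j • μ j) (b : ι → ℝ) :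
    Bornology.IsBounded (polyhedron μ b) := by
  have hbdd (ξ : Dual ℝ E) : ∃ C, ∀ x ∈ polyhedron μ b, ξ x ≤ C := by
    obtain ⟨c, hc, rfl⟩ := hgen ξ
    refine ⟨∑ j, c j * b j, fun x hx => ?_⟩
    simp only [LinearMap.sum_apply, LinearMap.smul_apply, smul_eq_mul]
    exact Finset.sum_le_sum fun j _ => mul_le_mul_of_nonneg_left (hx j) (hc j)
  let e := (finBasis ℝ E).equivFunL
  choose hi hhi using fun i => hbdd (LinearMap.proj i ∘ₗ e.toLinearMap)
  choose lo hlo using fun i => hbdd (-(LinearMap.proj i ∘ₗ e.toLinearMap))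
  refine (e.antilipschitz.isBounded_preimage (Metric.isBounded_Icc (-lo) hi)).subset fun x hx => ?_
  exact ⟨fun i => neg_le.mp (hlo i x hx), fun i => hhi i x hx⟩

theorem exists_isFormBasis_forall_eq [Fintype ι]
    (hgen : ∀ ξ : Dual ℝ E, ∃ c : ι → ℝ, (∀ j, 0 ≤ c j) ∧ ξ = ∑ j, c j • μ j)
    (hne : (polyhedron μ b).Nonempty) :
    ∃ B, IsFormBasis μ B ∧ ∃ x ∈ polyhedron μ b, ∀ j ∈ B, μ j x = b j := by
  have := FiniteDimensional.proper ℝ E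
  have hcompact : IsCompact (polyhedron μ b) :=
    Metric.isCompact_of_isClosed_isBounded (isClosed_polyhedron μ b) (isBounded_polyhedron hgen b)
  obtain ⟨x, hx⟩ := hcompact.extremePoints_nonempty hne
  have hspan : Submodule.span ℝ (μ '' {j | μ j x = b j}) = ⊤ :=
    span_eq_top_of_forall_eq_zero fun v hv =>
      eq_zero_of_mem_extremePoints_polyhedron hx (by simpa using hv)
  obtain ⟨B, hBx, hB⟩ := exists_finset_isFormBasis hspan
  exact ⟨B, hB, x, hx.1, hBx⟩

end Polyhedra

theorem closure_subset_of_isPreconnected_of_disjoint_frontier {X : Type*} [TopologicalSpace X]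
    {τ D : Set X} (hτ : IsPreconnected τ) (hD : IsClosed D) (hdisj : Disjoint τ (frontier D))
    (hne : (τ ∩ D).Nonempty) : closure τ ⊆ D := by
  have hinterior : τ ∩ D ⊆ interior D := fun x ⟨hx, hxD⟩ => by
    by_contra hxi
    exact hdisj.le_bot ⟨hx, subset_closure hxD, hxi⟩
  have hcover : τ ⊆ interior D ∪ Dᶜ := fun x hx =>
    (em (x ∈ D)).imp (fun hxD => hinterior ⟨hx, hxD⟩) id
  have hsub : τ ⊆ interior D := hτ.subset_left_of_subset_union isOpen_interior hD.isOpen_compl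
    (disjoint_compl_right.mono_left interior_subset) hcover
    (hne.mono fun x hx => ⟨hx.1, hinterior hx⟩)
  exact closure_minimal (hsub.trans interior_subset) hD

section Chambers

open Filter Topology Module

variable {ι V : Type*} [AddCommGroup V] [Module ℝ V] {μ : ι → Dual ℝ V}
  {s : Finset ι → (ι → ℝ) →ₗ[ℝ] V} {B : Finset ι} {b : ι → ℝ}

/-- The cone `d_B` of the parameters `b` for which the vertex `s B b` lies in `P(b)`. -/
def feasibleCone (μ : ι → Dual ℝ V) (s : Finset ι → (ι → ℝ) →ₗ[ℝ] V) (B : Finset ι) :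
    Set (ι → ℝ) :=
  {b | ∀ k ∉ B, μ k (s B b) ≤ b k}

theorem isClosed_feasibleCone [Finite ι] (μ : ι → Dual ℝ V) (s : Finset ι → (ι → ℝ) →ₗ[ℝ] V)
    (B : Finset ι) : IsClosed (feasibleCone μ s B) := by
  have heq : feasibleCone μ s B = ⋂ k, ⋂ (_ : k ∉ B), {b | (μ k ∘ₗ s B) b ≤ b k} := by
    ext b
    simp [feasibleCone]
  rw [heq]
  exact isClosed_iInter fun k => isClosed_iInter fun _ =>
    isClosed_le (LinearMap.continuous_of_finiteDimensional _) (continuous_apply k)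

theorem apply_lt_of_notMem_frontier_feasibleCone (hB : IsFormBasis μ B)
    (hs : ∀ b, ∀ j ∈ B, μ j (s B b) = b j) (hb : b ∈ feasibleCone μ s B)
    (hfr : b ∉ frontier (feasibleCone μ s B)) {k : ι} (hk : k ∉ B) : μ k (s B b) < b k := by
  classical
  have hinterior : b ∈ interior (feasibleCone μ s B) := by
    by_contra hbi
    exact hfr ⟨subset_closure hb, hbi⟩
  have hcont : Continuous fun ε : ℝ => b - ε • Pi.single k (1 : ℝ) := by fun_prop
  have hlim : Tendsto (fun ε : ℝ => b - ε • Pi.single k (1 : ℝ)) (𝓝[>] 0) (𝓝 b) :=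
    (hcont.tendsto' 0 b (by simp)).mono_left nhdsWithin_le_nhds
  obtain ⟨ε, hmem, hpos : 0 < ε⟩ := ((hlim.eventually
    (mem_interior_iff_mem_nhds.mp hinterior)).and self_mem_nhdsWithin).exists
  have hsingle : s B (Pi.single k 1) = 0 := hB.eq_zero fun j hj => by
    rw [hs _ j hj, Pi.single_eq_of_ne (ne_of_mem_of_not_mem hj hk)]
  have hle : μ k (s B b) ≤ b k - ε := by simpa [hsingle] using hmem k hk
  linarith

variable [DecidableEq ι]

theorem vertexAt_apply_single
    (hB : IsFormBasis μ B) (hs : ∀ b, ∀ j ∈ B, μ j (s B b) = b j) (b : ι → ℝ) :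
    vertexAt (fun B j => s B (Pi.single j 1)) b B = s B b := by
  refine sub_eq_zero.mp (hB.eq_zero fun i hi => ?_)
  simp [vertexAt, hs _ i hi, Pi.single_apply, hi]

theorem isSimpleVertexSystem_of_notMem_frontier [Finite ι] [FiniteDimensional ℝ V]
    (hneg : ∀ v : V, v ≠ 0 → ∃ k, μ k v < 0)
    (hs : ∀ B, IsFormBasis μ B → ∀ b, ∀ j ∈ B, μ j (s B b) = b j)
    (hfr : ∀ B, IsFormBasis μ B → b ∉ frontier (feasibleCone μ s B))
    (hvertex : ∃ B, IsFormBasis μ B ∧ ∃ x ∈ polyhedron μ b, ∀ j ∈ B, μ j x = b j)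
    {𝓕 : Finset (Finset ι)} (h𝓕 : ∀ B, B ∈ 𝓕 ↔ IsFormBasis μ B ∧ b ∈ feasibleCone μ s B) :
    IsSimpleVertexSystem μ b 𝓕 fun B j => s B (Pi.single j 1) := by
  have hmem {B : Finset ι} (hB : IsFormBasis μ B) {x : V} (hx : x ∈ polyhedron μ b)
      (hxB : ∀ j ∈ B, μ j x = b j) : B ∈ 𝓕 := by
    have hsx : s B b = x := sub_eq_zero.mp <| hB.eq_zero fun j hj => by
      rw [map_sub, hs B hB b j hj, hxB j hj, sub_self]
    exact (h𝓕 B).mpr ⟨hB, fun k _ => hsx ▸ hx k⟩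
  have hbasis {B : Finset ι} (hB : B ∈ 𝓕) : IsFormBasis μ B := ((h𝓕 B).mp hB).1
  exact {
    nonempty := by
      obtain ⟨B, hB, x, hx, hxB⟩ := hvertex
      exact ⟨B, hmem hB hx hxB⟩
    exists_neg := hneg
    dual := fun B hB i hi j _ => by rw [hs B (hbasis hB) _ i hi, Pi.single_apply]
    separating := fun B hB x => (hbasis hB).eq_zero
    lt := fun B hB k hk => by
      rw [vertexAt_apply_single (hbasis hB) (hs B (hbasis hB))]
      exact apply_lt_of_notMem_frontier_feasibleCone (hbasis hB) (hs B (hbasis hB))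
        ((h𝓕 B).mp hB).2 (hfr B (hbasis hB)) hk
    complete := fun B hB i hi k hk hsep y hy hyB => by
      refine hmem (isFormBasis_iff.mpr ⟨?_, hsep⟩) hy hyB
      rw [Finset.card_insert_of_notMem fun hk' => hk (Finset.mem_of_mem_erase hk'),
        Finset.card_erase_add_one hi, (isFormBasis_iff.mp (hbasis hB)).1] }

theorem exists_isSimpleVertexSystem_of_isPreconnected {E : Type*} [NormedAddCommGroup E]
    [NormedSpace ℝ E] [FiniteDimensional ℝ E] [Fintype ι] {μ : ι → Dual ℝ E}
    {s : Finset ι → (ι → ℝ) →ₗ[ℝ] E}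
    (hgen : ∀ ξ : Dual ℝ E, ∃ c : ι → ℝ, (∀ j, 0 ≤ c j) ∧ ξ = ∑ j, c j • μ j)
    (hs : ∀ B, IsFormBasis μ B → ∀ b, ∀ j ∈ B, μ j (s B b) = b j)
    {τ : Set (ι → ℝ)} (hτ : IsPreconnected τ) {b₀ : ι → ℝ} (hb₀ : b₀ ∈ τ)
    (hfr : ∀ b ∈ τ, ∀ B, IsFormBasis μ B → b ∉ frontier (feasibleCone μ s B))
    (hne : (polyhedron μ b₀).Nonempty) :
    ∃ 𝓕 w, IsSimpleVertexSystem μ b₀ 𝓕 w ∧ closure τ ⊆ typeCone μ 𝓕 w := by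
  classical
  let 𝓕 : Finset (Finset ι) := {B | IsFormBasis μ B ∧ b₀ ∈ feasibleCone μ s B}
  have h𝓕 (B : Finset ι) : B ∈ 𝓕 ↔ IsFormBasis μ B ∧ b₀ ∈ feasibleCone μ s B := by simp [𝓕]
  refine ⟨𝓕, _, isSimpleVertexSystem_of_notMem_frontier
    (fun v => exists_apply_neg_of_forall_eq_sum hgen) hs (hfr b₀ hb₀)
    (exists_isFormBasis_forall_eq hgen hne) h𝓕, fun b hb B hB k hk => ?_⟩
  obtain ⟨hbasis, hfeasible⟩ := (h𝓕 B).mp hB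
  have hsub : closure τ ⊆ feasibleCone μ s B :=
    closure_subset_of_isPreconnected_of_disjoint_frontier hτ (isClosed_feasibleCone μ s B)
      (Set.disjoint_left.mpr fun b hb => hfr b hb B hbasis) ⟨b₀, hb₀, hfeasible⟩
  rw [vertexAt_apply_single hbasis (hs B hbasis)]
  exact hsub hb k hk

end Chambers

/-! ### Leading terms along a ray -/

section Asymptotics

open Filter Topology

open scoped Pointwise

variable {σ : Type*}

theorem eval_smul_of_isHomogeneous {R : Type*} [CommSemiring R] {m : ℕ} {p : MvPolynomial σ R}
    (hp : p.IsHomogeneous m) (a : R) (x : σ → R) :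
    MvPolynomial.eval (a • x) p = a ^ m * MvPolynomial.eval x p := by
  rw [MvPolynomial.eval_eq, MvPolynomial.eval_eq, Finset.mul_sum]
  refine Finset.sum_congr rfl fun s hs => ?_
  simp only [Pi.smul_apply, smul_eq_mul, mul_pow, Finset.prod_mul_distrib,
    Finset.prod_pow_eq_pow_sum, sum_eq_of_isHomogeneous hp hs]
  ring

theorem finite_setOf_intCast_mem_of_isBounded [Finite σ] {s : Set (σ → ℝ)}
    (hs : Bornology.IsBounded s) : {x : σ → ℤ | (fun i => (x i : ℝ)) ∈ s}.Finite := by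
  classical
  have := Fintype.ofFinite σ
  obtain ⟨C, hC⟩ := hs.exists_norm_le
  refine (Set.finite_Icc (fun _ => -⌈C⌉) fun _ => ⌈C⌉).subset fun x hx => ?_
  have hle (i : σ) : |x i| ≤ ⌈C⌉ := by
    have := ((norm_le_pi_norm _ i).trans (hC _ hx)).trans (Int.le_ceil C)
    rw [Real.norm_eq_abs] at this
    exact_mod_cast this
  exact ⟨fun i => (abs_le.mp (hle i)).1, fun i => (abs_le.mp (hle i)).2⟩

theorem span_range_basisFun_eq_range_intCast [Finite σ] :
    (Submodule.span ℤ (Set.range (Pi.basisFun ℝ σ)) : Set (σ → ℝ)) =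
      Set.range fun (x : σ → ℤ) i => (x i : ℝ) := by
  ext y
  rw [SetLike.mem_coe, Module.Basis.mem_span_iff_repr_mem]
  simp only [Pi.basisFun_repr, algebraMap_int_eq, Set.mem_range, Int.coe_castRingHom, funext_iff]
  exact ⟨Classical.skolem.mp, fun ⟨x, hx⟩ i => ⟨x i, hx i⟩⟩

theorem tsum_inter_smul_span_basisFun_eq_finsum [Finite σ] {s : Set (σ → ℝ)}
    (hs : Bornology.IsBounded s) (F : (σ → ℝ) → ℝ) {r : ℝ} (hr : r ≠ 0) :
    ∑' x : ↑(s ∩ r • (Submodule.span ℤ (Set.range (Pi.basisFun ℝ σ)) : Set (σ → ℝ))), F x =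
      ∑ᶠ x ∈ {x : σ → ℤ | (r • fun i => (x i : ℝ)) ∈ s}, F (r • fun i => (x i : ℝ)) := by
  set g : (σ → ℤ) → σ → ℝ := fun x => r • fun i => (x i : ℝ)
  have hinj : Function.Injective g :=
    (smul_right_injective _ hr).comp Int.cast_injective.comp_left
  have himage : s ∩ r • (Submodule.span ℤ (Set.range (Pi.basisFun ℝ σ)) : Set (σ → ℝ)) =
      g '' {x | g x ∈ s} := by
    rw [span_range_basisFun_eq_range_intCast, ← Set.image_smul, ← Set.range_comp, Set.inter_comm,
      ← Set.image_preimage_eq_range_inter]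
    rfl
  have hfin : {x | g x ∈ s}.Finite := by
    have := Fintype.ofFinite σ
    refine (finite_setOf_intCast_mem_of_isBounded (hs.smul₀ r⁻¹)).subset fun x hx => ?_
    exact ⟨g x, hx, inv_smul_smul₀ hr _⟩
  have := hfin.to_subtype
  rw [tsum_congr_set_coe F himage, tsum_image F hinj.injOn, tsum_eq_finsum (Set.toFinite _)]
  exact finsum_set_coe_eq_finsum_mem (f := fun x => F (g x)) {x | g x ∈ s}

theorem tendsto_finsum_eval_div_pow [Fintype σ] {s : Set (σ → ℝ)}
    (hb : Bornology.IsBounded s) (hm : MeasurableSet s) (hfr : volume (frontier s) = 0) {m : ℕ}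
    {p : MvPolynomial σ ℝ} (hp : p.IsHomogeneous m) :
    Tendsto (fun n : ℕ =>
      (∑ᶠ x ∈ {x : σ → ℤ | (n : ℝ)⁻¹ • (fun i => (x i : ℝ)) ∈ s},
        MvPolynomial.eval (fun i => (x i : ℝ)) p) / (n : ℝ) ^ (Fintype.card σ + m)) atTop
      (𝓝 (∫ x in s, MvPolynomial.eval x p)) := by
  refine (tendsto_tsum_div_pow_atTop_integral s (fun x => MvPolynomial.eval x p)
    p.continuous_eval hb hm hfr).congr' ?_
  refine (eventually_gt_atTop 0).mono fun n hn => ?_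
  have hn₀ : (n : ℝ) ≠ 0 := Nat.cast_ne_zero.mpr hn.ne'
  beta_reduce
  rw [tsum_inter_smul_span_basisFun_eq_finsum hb (fun x => MvPolynomial.eval x p)
    (inv_ne_zero hn₀)]
  simp only [eval_smul_of_isHomogeneous hp]
  rw [← mul_finsum_mem, inv_pow, inv_mul_eq_div, div_div, ← pow_add, add_comm]

variable {N : ℕ} {Ψ : Finset (Fin N → ℚ)} {k : ℕ}

theorem tendsto_mul_prod_smul_div_pow {f : (Fin N → ℝ) → ℝ} {α : Fin N → ℕ}
    (hα : ∑ i, α i ≤ k) (hf : IsStepPoly Ψ (k - ∑ i, α i) f) (b : Fin N → ℝ) :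
    Tendsto (fun n : ℕ => f ((n : ℝ) • b) * (∏ i, ((n : ℝ) • b) i ^ α i) / (n : ℝ) ^ k) atTop
      (𝓝 (if ∑ i, α i = k then f b * ∏ i, b i ^ α i else 0)) := by
  have hprod (n : ℕ) :
      ∏ i, ((n : ℝ) • b) i ^ α i = (n : ℝ) ^ (∑ i, α i) * ∏ i, b i ^ α i := by
    simp only [Pi.smul_apply, smul_eq_mul, mul_pow, Finset.prod_mul_distrib,
      Finset.prod_pow_eq_pow_sum]
  simp only [hprod]
  obtain hlt | rfl := hα.lt_or_eq
  · rw [if_neg hlt.ne]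
    obtain ⟨r, rfl⟩ := Nat.exists_eq_add_of_lt hlt
    obtain ⟨C, hC⟩ := hf.exists_forall_abs_le
    have hinv : Tendsto (fun n : ℕ => ((n : ℝ) ^ (r + 1))⁻¹) atTop (𝓝 0) :=
      ((tendsto_pow_atTop r.succ_ne_zero).comp tendsto_natCast_atTop_atTop).inv_tendsto_atTop
    have hbdd : IsBoundedUnder (· ≤ ·) atTop
        (norm ∘ fun n : ℕ => f ((n : ℝ) • b) * ∏ i, b i ^ α i) := by
      refine isBoundedUnder_of ⟨C * |∏ i, b i ^ α i|, fun n => ?_⟩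
      rw [Function.comp_apply, norm_mul, Real.norm_eq_abs, Real.norm_eq_abs]
      exact mul_le_mul_of_nonneg_right (hC _) (abs_nonneg _)
    refine (hinv.zero_mul_isBoundedUnder_le hbdd).congr' ?_
    filter_upwards [eventually_gt_atTop 0] with n hn
    field
  · rw [if_pos rfl]
    rw [Nat.sub_self] at hf
    refine tendsto_const_nhds.congr' ?_
    filter_upwards [eventually_gt_atTop 0] with n hn
    rw [hf.apply_eq_apply ((n : ℝ) • b) b]
    field

theorem tendsto_finsum_isStepPoly_div_pow {c : (Fin N → ℕ) → (Fin N → ℝ) → ℝ}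
    (hc : ∀ α : Fin N → ℕ, ∑ i, α i ≤ k → IsStepPoly Ψ (k - ∑ i, α i) (c α)) (b : Fin N → ℝ) :
    Tendsto (fun n : ℕ => (∑ᶠ α ∈ {α : Fin N → ℕ | ∑ i, α i ≤ k},
      c α ((n : ℝ) • b) * ∏ i, ((n : ℝ) • b) i ^ α i) / (n : ℝ) ^ k) atTop
      (𝓝 (∑ᶠ α ∈ {α : Fin N → ℕ | ∑ i, α i = k}, c α b * ∏ i, b i ^ α i)) := by
  have hfin := finite_setOf_sum_le (Fin N) k
  have htop : ∑ᶠ α ∈ {α : Fin N → ℕ | ∑ i, α i = k}, c α b * ∏ i, b i ^ α i =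
      ∑ α ∈ hfin.toFinset, if ∑ i, α i = k then c α b * ∏ i, b i ^ α i else 0 := by
    rw [← Finset.sum_filter, ← finsum_mem_coe_finset]
    congr! 3 with α
    simpa using fun h : ∑ i, α i = k => h.le
  rw [htop]
  simp only [finsum_mem_eq_finite_toFinset_sum _ hfin, Finset.sum_div]
  exact tendsto_finsetSum _ fun α hα =>
    have hle := hfin.mem_toFinset.mp hα
    tendsto_mul_prod_smul_div_pow hle (hc α hle) b

theorem finsum_top_degree_eq_integral [Fintype σ] {s : Set (σ → ℝ)} (hs : Bornology.IsBounded s)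
    (hm : MeasurableSet s) (hfr : volume (frontier s) = 0) {m : ℕ} {p : MvPolynomial σ ℝ}
    (hp : p.IsHomogeneous m) {c : (Fin N → ℕ) → (Fin N → ℝ) → ℝ}
    (hc : ∀ α : Fin N → ℕ, ∑ i, α i ≤ Fintype.card σ + m →
      IsStepPoly Ψ (Fintype.card σ + m - ∑ i, α i) (c α)) {b : Fin N → ℝ}
    (heq : ∀ n : ℕ, 0 < n →
      ∑ᶠ x ∈ {x : σ → ℤ | (n : ℝ)⁻¹ • (fun i => (x i : ℝ)) ∈ s},
        MvPolynomial.eval (fun i => (x i : ℝ)) p =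
      ∑ᶠ α ∈ {α : Fin N → ℕ | ∑ i, α i ≤ Fintype.card σ + m},
        c α ((n : ℝ) • b) * ∏ i, ((n : ℝ) • b) i ^ α i) :
    ∑ᶠ α ∈ {α : Fin N → ℕ | ∑ i, α i = Fintype.card σ + m}, c α b * ∏ i, b i ^ α i =
      ∫ x in s, MvPolynomial.eval x p := by
  refine tendsto_nhds_unique (tendsto_finsum_isStepPoly_div_pow hc b)
    ((tendsto_finsum_eval_div_pow hs hm hfr hp).congr' ?_)
  exact (eventually_gt_atTop 0).mono fun n hn => congrArg (· / _) (heq n hn)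

end Asymptotics

/-! ### Lattice point sums over simple polytopes -/

section LatticeSums

open Module

open scoped Matrix

variable {n : Type*} [Fintype n] {N : ℕ} {μ : Fin N → Dual ℝ (n → ℝ)}
  {A : Matrix (Fin N) n ℤ} {b₀ : Fin N → ℝ} {𝓕 : Finset (Finset (Fin N))}
  {w : Finset (Fin N) → Fin N → n → ℝ} {m : ℕ}

theorem det_ne_zero_of_forall_mulVec_eq_zero [DecidableEq n] {M : Matrix n n ℤ}
    (hM : ∀ x : n → ℝ, M.map (Int.cast : ℤ → ℝ) *ᵥ x = 0 → x = 0) : M.det ≠ 0 := by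
  intro hdet
  have hdet' : (M.map (Int.cast : ℤ → ℝ)).det = 0 := by
    rw [← Int.cast_det, hdet, Int.cast_zero]
  obtain ⟨x, hx, hMx⟩ := Matrix.exists_mulVec_eq_zero_iff.mpr hdet'
  exact hx (hM x hMx)

theorem halfSpaceIndicator_row (hA : ∀ j x, μ j x = ∑ i, (A j i : ℝ) * x i) (j : Fin N) (t : ℝ)
    (x : n → ℤ) [Decidable (μ j (fun i => (x i : ℝ)) ≤ t)] :
    halfSpaceIndicator (A.row j) t x = if μ j (fun i => (x i : ℝ)) ≤ t then 1 else 0 := by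
  simp [halfSpaceIndicator, hA, dotProduct]

namespace IsSimpleVertexSystem

theorem hasStepExpansion_polarSum (h : IsSimpleVertexSystem μ b₀ 𝓕 w)
    (hA : ∀ j x, μ j x = ∑ i, (A j i : ℝ) * x i) (θ : (n → ℝ) → ℝ) :
    HasStepExpansion fun b (x : n → ℤ) =>
      polarSum 𝓕 w (fun j => 1 - halfSpaceIndicator (A.row j) (b j) x) θ := by
  classical
  have hcone (B) (hB : B ∈ 𝓕) : HasStepExpansion fun b (x : n → ℤ) =>
      ∏ j ∈ B, (θ (w B j) - (1 - halfSpaceIndicator (A.row j) (b j) x)) := by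
    let e : n ≃ B := Fintype.equivOfCardEq (by
      rw [Fintype.card_coe, h.card_eq_finrank hB, finrank_fintype_fun_eq_card])
    have hdet : (A.submatrix (fun i => (e i).1) id).det ≠ 0 := by
      refine det_ne_zero_of_forall_mulVec_eq_zero fun x hx => h.separating B hB x fun j hj => ?_
      obtain ⟨i, hi⟩ := e.surjective ⟨j, hj⟩
      simpa [Matrix.mulVec, dotProduct, hi, hA] using congrFun hx i
    convert HasStepExpansion.prod_halfSpaceIndicator_add hdet fun i => θ (w B (e i)) - 1
      using 3 with b x
    rw [← Finset.prod_coe_sort, ← e.prod_comp]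
    exact Finset.prod_congr rfl fun i _ => by ring
  convert HasStepExpansion.sum hcone using 3 with b x
  simp [polarSum]

theorem exists_stepFiltration_finsum_pow (h : IsSimpleVertexSystem μ b₀ 𝓕 w)
    (hA : ∀ j x, μ j x = ∑ i, (A j i : ℝ) * x i)
    (hfin : ∀ b, {x : n → ℤ | (fun i => (x i : ℝ)) ∈ polyhedron μ b}.Finite) (m : ℕ) :
    ∃ (Ψ : Finset (Fin N → ℚ)) (V : Finset (n → ℝ)), 0 ∉ V ∧
      ∀ l : n → ℝ, (∀ v ∈ V, l ⬝ᵥ v ≠ 0) → ∃ F ∈ stepFiltration Ψ (Fintype.card n + m),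
        ∀ b ∈ typeCone μ 𝓕 w,
          ∑ᶠ x ∈ {x : n → ℤ | (fun i => (x i : ℝ)) ∈ polyhedron μ b},
            (l ⬝ᵥ fun i => (x i : ℝ)) ^ m = F b := by
  classical
  obtain ⟨ξ, hξ, -⟩ := h.isPivotSystem.exists_isGenericForm (u := Empty.elim) 0 (by simp)
  obtain ⟨Ψ, V, hV, hpow⟩ :=
    (h.hasStepExpansion_polarSum hA (posIndicator ξ)).exists_sum_mul_pow_eq
  let toReal : (n → ℤ) →+ n → ℝ := (Int.castAddHom ℝ).compLeft n
  have htoReal : Function.Injective toReal := Int.cast_injective.comp_left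
  refine ⟨Ψ, V.image toReal, fun h₀ => ?_, fun l hl => ?_⟩
  · obtain ⟨v, hv, hv₀⟩ := Finset.mem_image.mp h₀
    exact hV ((map_eq_zero_iff toReal htoReal).mp hv₀ ▸ hv)
  let ℓ : (n → ℤ) →+ ℝ := (dotProductBilin ℝ ℝ l).toAddMonoidHom.comp toReal
  obtain ⟨F, hF, hFb⟩ := hpow ℓ m fun v hv => hl _ (Finset.mem_image_of_mem _ hv)
  refine ⟨F, hF, fun b hb => ?_⟩
  let p : (n → ℤ) →₀ ℝ := Finsupp.onFinset (hfin b).toFinset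
    (fun x => if (fun i => (x i : ℝ)) ∈ polyhedron μ b then 1 else 0) (by simp)
  have hp : (fun x : n → ℤ => polarSum 𝓕 w
      (fun j => 1 - halfSpaceIndicator (A.row j) (b j) x) (posIndicator ξ)) = p := by
    ext x
    rw [Finsupp.onFinset_apply, ← h.polarSum_eq_indicator hξ hb fun i => (x i : ℝ)]
    congr 1
    ext j
    rw [halfSpaceIndicator_row hA]
    split_ifs <;> simp
  rw [hFb b p hp, Finsupp.onFinset_sum _ (by simp), finsum_mem_eq_finite_toFinset_sum _ (hfin b)]
  refine Finset.sum_congr rfl fun x hx => ?_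
  have hx' : (fun i => (x i : ℝ)) ∈ polyhedron μ b := (hfin b).mem_toFinset.mp hx
  rw [if_pos hx', one_mul]
  rfl

theorem exists_stepFiltration_finsum_eval (h : IsSimpleVertexSystem μ b₀ 𝓕 w)
    (hA : ∀ j x, μ j x = ∑ i, (A j i : ℝ) * x i)
    (hfin : ∀ b, {x : n → ℤ | (fun i => (x i : ℝ)) ∈ polyhedron μ b}.Finite)
    {p : MvPolynomial n ℝ} (hp : p.IsHomogeneous m) :
    ∃ Ψ, ∃ F ∈ stepFiltration Ψ (Fintype.card n + m), ∀ b ∈ typeCone μ 𝓕 w,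
      ∑ᶠ x ∈ {x : n → ℤ | (fun i => (x i : ℝ)) ∈ polyhedron μ b},
        MvPolynomial.eval (fun i => (x i : ℝ)) p = F b := by
  obtain ⟨Ψ, V, hV, hpow⟩ := h.exists_stepFiltration_finsum_pow hA hfin m
  refine ⟨Ψ, ?_⟩
  have hspan := mem_span_pow_of_isHomogeneous hp hV
  clear hp
  induction hspan using Submodule.span_induction with
  | mem p hp =>
    obtain ⟨l, hl, rfl⟩ := hp
    simpa [dotProduct] using hpow l hl
  | zero => exact ⟨0, Submodule.zero_mem _, fun b _ => by simp⟩
  | add p q _ _ hp hq =>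
    obtain ⟨F, hF, hFb⟩ := hp
    obtain ⟨G, hG, hGb⟩ := hq
    refine ⟨F + G, Submodule.add_mem _ hF hG, fun b hb => ?_⟩
    simp only [map_add, Pi.add_apply]
    rw [finsum_mem_add_distrib (hfin b), hFb b hb, hGb b hb]
  | smul c p _ hp =>
    obtain ⟨F, hF, hFb⟩ := hp
    refine ⟨c • F, Submodule.smul_mem _ _ hF, fun b hb => ?_⟩
    simp only [MvPolynomial.smul_eval, Pi.smul_apply, smul_eq_mul]
    rw [← mul_finsum_mem, hFb b hb]

theorem exists_isStepPoly_forall_mem_typeCone (h : IsSimpleVertexSystem μ b₀ 𝓕 w)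
    (hA : ∀ j x, μ j x = ∑ i, (A j i : ℝ) * x i)
    (hbdd : ∀ b, Bornology.IsBounded (polyhedron μ b))
    {p : MvPolynomial n ℝ} (hp : p.IsHomogeneous m) :
    ∃ (Ψ : Finset (Fin N → ℚ)) (c : (Fin N → ℕ) → (Fin N → ℝ) → ℝ),
      (∀ α : Fin N → ℕ, ∑ i, α i ≤ Fintype.card n + m →
        IsStepPoly Ψ (Fintype.card n + m - ∑ i, α i) (c α)) ∧
      ∀ b ∈ typeCone μ 𝓕 w,
        (∑ᶠ x ∈ {x : n → ℤ | (fun i => (x i : ℝ)) ∈ polyhedron μ b},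
            MvPolynomial.eval (fun i => (x i : ℝ)) p =
          ∑ᶠ α ∈ {α : Fin N → ℕ | ∑ i, α i ≤ Fintype.card n + m}, c α b * ∏ i, b i ^ α i) ∧
        (∑ᶠ α ∈ {α : Fin N → ℕ | ∑ i, α i = Fintype.card n + m}, c α b * ∏ i, b i ^ α i =
          ∫ x in polyhedron μ b, MvPolynomial.eval x p) := by
  obtain ⟨Ψ, F, hF, hsum⟩ := h.exists_stepFiltration_finsum_eval hA
    (fun b => finite_setOf_intCast_mem_of_isBounded (hbdd b)) hp
  obtain ⟨c, hc, hFc⟩ := exists_isStepPoly_of_mem_stepFiltration hF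
  refine ⟨Ψ, c, hc, fun b hb => ⟨(hsum b hb).trans (hFc b), ?_⟩⟩
  refine finsum_top_degree_eq_integral (hbdd b) (isClosed_polyhedron μ b).measurableSet
    ((convex_polyhedron μ b).addHaar_frontier volume) hp hc fun k hk => ?_
  simp only [Set.mem_ofPred_eq, inv_smul_mem_polyhedron_iff (Nat.cast_pos.mpr hk : (0 : ℝ) < k)]
  exact (hsum _ (smul_mem_typeCone hb k.cast_nonneg)).trans (hFc _)

end IsSimpleVertexSystem

end LatticeSums

theorem stmt_0
    (d N m : ℕ) (hd : 1 ≤ d) (hN : 1 ≤ N)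
    -- the linear forms μ_j, with integer coefficients
    (μ : Fin N → ((Fin d → ℝ) →ₗ[ℝ] ℝ))
    (hμint : ∀ j, ∃ z : Fin d → ℤ, ∀ x, μ j x = ∑ i, (z i : ℝ) * x i)
    -- the μ_j generate the dual space as a cone
    (hgen : ∀ ξ : (Fin d → ℝ) →ₗ[ℝ] ℝ,
      ∃ c : Fin N → ℝ, (∀ j, 0 ≤ c j) ∧ ξ = ∑ j, c j • μ j)
    -- the parametric polytope P(b)
    (P : (Fin N → ℝ) → Set (Fin d → ℝ))
    (hP : ∀ b, P b = {x | ∀ j, μ j x ≤ b j})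
    -- 𝓑 : subsets B such that (μ_j)_{j ∈ B} is a basis of the dual space
    (𝓑 : Set (Finset (Fin N)))
    (h𝓑 : ∀ B : Finset (Fin N), B ∈ 𝓑 ↔
      (LinearIndependent ℝ (fun j : {j // j ∈ B} => μ j.1) ∧
        Submodule.span ℝ (Set.range (fun j : {j // j ∈ B} => μ j.1)) = ⊤))
    -- the vertex maps s_B
    (sB : Finset (Fin N) → ((Fin N → ℝ) →ₗ[ℝ] (Fin d → ℝ)))
    (hsB : ∀ B ∈ 𝓑, ∀ b : Fin N → ℝ, ∀ j ∈ B, μ j (sB B b) = b j)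
    -- the cones d_B
    (dB : Finset (Fin N) → Set (Fin N → ℝ))
    (hdB : ∀ B, dB B = {b | ∀ k ∉ B, μ k (sB B b) ≤ b k})
    -- τ is a μ-chamber: a connected component of the complement of the union of
    -- the boundaries of the cones d_B, B ∈ 𝓑
    (τ : Set (Fin N → ℝ))
    (hτ : ∃ b₀ ∈ {b : Fin N → ℝ | ∀ B ∈ 𝓑, b ∉ frontier (dB B)},
      τ = connectedComponentIn {b : Fin N → ℝ | ∀ B ∈ 𝓑, b ∉ frontier (dB B)} b₀)
    -- τ is admissible
    (hadm : ∀ b ∈ τ, (P b).Nonempty)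
    -- h is a homogeneous polynomial of degree m
    (h : MvPolynomial (Fin d) ℝ) (hh : h.IsHomogeneous m) :
    ∃ (Ψ : Finset (Fin N → ℚ)) (c : (Fin N → ℕ) → (Fin N → ℝ) → ℝ),
      (∀ α : Fin N → ℕ, (∑ i, α i) ≤ d + m →
        IsStepPoly Ψ (d + m - ∑ i, α i) (c α)) ∧
      ∀ b ∈ closure τ,
        -- (a) the discrete weighted sum is the quasi-polynomial
        ((∑ᶠ x ∈ {x : Fin d → ℤ | (fun i => (x i : ℝ)) ∈ P b},
            MvPolynomial.eval (fun i => (x i : ℝ)) h) =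
          ∑ᶠ α ∈ {α : Fin N → ℕ | (∑ i, α i) ≤ d + m},
            c α b * ∏ i, b i ^ α i) ∧
        -- (b) the top-degree part is the integral
        ((∑ᶠ α ∈ {α : Fin N → ℕ | (∑ i, α i) = d + m},
            c α b * ∏ i, b i ^ α i) =
          ∫ x in P b, MvPolynomial.eval x h) := by
  obtain ⟨b₀, hb₀, rfl⟩ := hτ
  obtain rfl : P = polyhedron μ := funext hP
  obtain rfl : 𝓑 = {B | IsFormBasis μ B} := Set.ext h𝓑
  obtain rfl : dB = feasibleCone μ sB := funext hdB
  choose A hA using hμint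
  have hb₀τ := mem_connectedComponentIn hb₀
  obtain ⟨𝓕, w, hsystem, hclosure⟩ := exists_isSimpleVertexSystem_of_isPreconnected hgen hsB
    isPreconnected_connectedComponentIn hb₀τ
    (fun b hb => connectedComponentIn_subset _ _ hb) (hadm b₀ hb₀τ)
  obtain ⟨Ψ, c, hc, hsum⟩ :=
    hsystem.exists_isStepPoly_forall_mem_typeCone hA (isBounded_polyhedron hgen) hh
  rw [Fintype.card_fin] at hc hsum
  exact ⟨Ψ, c, hc, fun b hb => hsum b (hclosure hb)⟩
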